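/- For a sentence J of size n, the colored immaculate function expands into the colored ribbon basis as 𝔖_J = Σ_I L^{-1}_{I,J} R_I, where the sum runs over all sentences I of size n and L^{-1}_{I,J} = Σ_𝒫 (−1)^{ℓ(𝒫)} prod(𝒫), the sum running over all directed paths 𝒫 from I to J in the colored immaculate descent graph 𝔇_A^n (so L^{-1}_{I,J} = 0 unless J is reachable from I, and L^{-1}_{J,J} = 1). -/

import Mathlib

open scoped BigOperators

namespace ColoredImm

variable {A : Type*}

/-- A *weak sentence* over the alphabet `A`: a finite list of words (words may be empty). -/
abbrev Sentence (A : Type*) := List (List A)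

/-- A genuine *sentence*: all of its words are nonempty. -/
def IsSentence (I : Sentence A) : Prop := ∀ w ∈ I, w ≠ []

/-- The size `|I|` of a sentence: its total number of letters. -/
def size (I : Sentence A) : ℕ := (I.map List.length).sum

/-- The word lengths `wℓ(I)` of a sentence. -/
def wl (I : Sentence A) : List ℕ := I.map List.length

/-- The flattening of a weak sentence: delete all empty words. -/
def flattenWS (I : Sentence A) : Sentence A := I.filter (fun w => !w.isEmpty)

/-- `Refines J I` means `J ⪯ I`: the sentence `I` can be obtained by concatenating
some adjacent words of `J` (so `J` is a refinement of `I`, and `I` a coarsening of `J`). -/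
def Refines (J I : Sentence A) : Prop :=
  ∃ P : List (Sentence A), (∀ p ∈ P, p ≠ []) ∧ P.flatten = J ∧ P.map List.flatten = I

/-! ### Fillings and colored immaculate tableaux -/

/-- An integer filling of a diagram, recorded row by row. -/
abbrev Filling := List (List ℕ)

/-- The entry of a filling at box `b = (row, column)` (0-indexed), with default `0`. -/
def entryAt (f : Filling) (b : ℕ × ℕ) : ℕ := (f.getD b.1 []).getD b.2 0

/-- `IsCIT I f`: `f` is a colored immaculate tableau of shape `I`; that is, `f` has the
same shape as the colored composition diagram of `I`, its entries are positive integers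
weakly increasing left to right along each row, and the entries in the first column are
strictly increasing from top to bottom. -/
def IsCIT (I : Sentence A) (f : Filling) : Prop :=
  f.map List.length = I.map List.length ∧
  (∀ row ∈ f, row.Chain' (· ≤ ·)) ∧
  (f.filterMap List.head?).Chain' (· < ·) ∧
  (∀ x ∈ f.flatten, 1 ≤ x)

/-- The colors (letters of `w`) of the boxes of one row whose entry (in `row`) is `v`,
read from left to right. -/
def rowWith (w : List A) (row : List ℕ) (v : ℕ) : List A :=
  ((w.zip row).filter (fun p => p.2 == v)).map Prod.fst

/-- The word of the type of a tableau at value `v`: the colors of all boxes with entry `v`,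
read left to right, from the bottom row up to the top row. -/
def typeWord (I : Sentence A) (f : Filling) (v : ℕ) : List A :=
  (((I.zip f).reverse).map (fun p => rowWith p.1 p.2 v)).flatten

/-- `HasType I f B` : the tableau `f` (of shape `I`) has type the weak sentence `B`,
i.e. for every positive integer `v`, the colors of the boxes of `f` containing `v`
(read left to right, bottom to top) form the `v`-th word of `B`. -/
def HasType (I : Sentence A) (f : Filling) (B : Sentence A) : Prop :=
  ∀ v, 1 ≤ v → typeWord I f v = B.getD (v - 1) []

/-- `K_{J,B}`: the number of colored immaculate tableaux of shape `J` and type `B`. -/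
noncomputable def KJB (J B : Sentence A) : ℕ :=
  Set.ncard {f : Filling | IsCIT J f ∧ HasType J f B}

/-! ### Standardization -/

/-- The list of boxes of a filling. -/
def boxes (f : Filling) : List (ℕ × ℕ) :=
  ((List.range f.length).map
    (fun r => (List.range (f.getD r []).length).map (fun j => (r, j)))).flatten

/-- `beforeB f b b'`: box `b` comes strictly before box `b'` in the type-reading order of `f`
(smaller entries first; among equal entries, lower rows first, and within a row left to right). -/
def beforeB (f : Filling) (b b' : ℕ × ℕ) : Bool :=
  entryAt f b < entryAt f b' ||
    (entryAt f b == entryAt f b' && (b'.1 < b.1 || (b.1 == b'.1 && b.2 < b'.2)))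

/-- The standardization of a filling: each box is renumbered (starting from `1`)
according to its position in the type-reading order. -/
def stdFill (f : Filling) : Filling :=
  (List.range f.length).map (fun r =>
    (List.range (f.getD r []).length).map (fun j =>
      1 + ((boxes f).filter (fun b' => beforeB f b' (r, j))).length))

/-- The number of boxes of a filling. -/
def nBoxes (f : Filling) : ℕ := f.flatten.length

/-- A filling of `n` boxes is standard when its entries are exactly `1, …, n`,
each appearing once. -/
def IsStandardF (f : Filling) : Prop := f.flatten.Perm (List.range' 1 (nBoxes f))

/-! ### Descents and the colored descent composition -/

/-- The (0-indexed) row containing the value `v` in a standard filling. -/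
def rowOf (f : Filling) (v : ℕ) : ℕ := f.findIdx (fun row => row.contains v)

/-- The sorted list of descents of a standard filling: those `i` with `1 ≤ i ≤ n-1`
such that `i+1` lies in a strictly lower row than `i`. -/
def descList (f : Filling) : List ℕ :=
  (List.range' 1 (nBoxes f - 1)).filter (fun i => decide (rowOf f i < rowOf f (i + 1)))

/-- The composition of `n` associated to a set of split positions `d_1 < … < d_k`:
`(d_1, d_2 - d_1, …, n - d_k)`. -/
def compOf (ds : List ℕ) (n : ℕ) : List ℕ :=
  List.zipWith (fun a b => b - a) (0 :: ds) (ds ++ [n])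

/-- Split a word into a sentence according to a composition. -/
def splitByComp : List A → List ℕ → List (List A)
  | _, [] => []
  | w, a :: rest => w.take a :: splitByComp (w.drop a) rest

/-- The color of the box containing the value `v` in a standard filling of shape `I`. -/
def colorOf [Inhabited A] (I : Sentence A) (f : Filling) (v : ℕ) : A :=
  (I.getD (rowOf f v) []).getD ((f.getD (rowOf f v) []).findIdx (fun x => x == v)) default

/-- The maximal word of the colored descent composition of a standard filling of shape `I`:
the colors of its boxes read in the order of their integer entries. -/
def readWord [Inhabited A] (I : Sentence A) (f : Filling) : List A :=
  (List.range (nBoxes f)).map (fun i => colorOf I f (i + 1))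

/-- The colored descent composition `co_A(U)` of a standard colored immaculate tableau:
read the colors of the boxes in the order of their entries, starting a new word
immediately after each descent. -/
def coA [Inhabited A] (I : Sentence A) (f : Filling) : Sentence A :=
  if nBoxes f = 0 then [] else splitByComp (readWord I f) (compOf (descList f) (nBoxes f))

/-- `L_{J,C}`: the number of standard colored immaculate tableaux of shape `J`
with colored descent composition `C`. -/
noncomputable def LJC [Inhabited A] (J C : Sentence A) : ℕ :=
  Set.ncard {f : Filling | IsCIT J f ∧ IsStandardF f ∧ coA J f = C}

/-! ### The colored quasisymmetric functions `QSym_A` -/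

/-- A (normal form of a) monomial in the partially commutative variables `x_{a,i}`:
a pair consisting of the list of words `(w_1, …, w_m)` and the list of (strictly
increasing, positive) second indices `(j_1 < … < j_m)`, representing
`x_{w_1,j_1} ⋯ x_{w_m,j_m}`. -/
abbrev Mono (A : Type*) := List (List A) × List ℕ

/-- A colored quasisymmetric "series": a formal linear combination of monomials,
recorded by its coefficient function.  `QSym_A` itself is the span of the colored
monomial functions `MQ I` inside this space. -/
abbrev QSymA (A : Type*) := Mono A → ℚ

/-- Validity of a monomial normal form: words and indices match up, the indices are
strictly increasing positive integers, and all words are nonempty. -/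
def ValidMono (m : Mono A) : Prop :=
  m.1.length = m.2.length ∧ m.2.Chain' (· < ·) ∧ (∀ j ∈ m.2, 1 ≤ j) ∧ ∀ w ∈ m.1, w ≠ []

open Classical in
/-- The colored monomial quasisymmetric function `M_I`: the sum of all monomials
`x_{w_1,j_1} ⋯ x_{w_m,j_m}` with `j_1 < … < j_m`, where `I = (w_1, …, w_m)`. -/
noncomputable def MQ (I : Sentence A) : QSymA A := fun m =>
  if m.1 = I ∧ ValidMono m then 1 else 0

/-- The largest entry of a filling. -/
def maxEntry (f : Filling) : ℕ := f.flatten.foldr max 0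

/-- The monomial `x_T` of a colored immaculate tableau `T = f` of shape `I`:
for `T` of type `B = (u_1, …, u_j)` it is `x_{u_1,1} x_{u_2,2} ⋯ x_{u_j,j}`
(empty words are skipped). -/
def monoOf (I : Sentence A) (f : Filling) : Mono A :=
  let vs := ((List.range (maxEntry f)).map (· + 1)).filter (fun v => !(typeWord I f v).isEmpty)
  (vs.map (typeWord I f), vs)

/-- The colored dual immaculate function `𝔖*_J = Σ_T x_T`, the sum of the monomials of all
colored immaculate tableaux `T` of shape `J` (its coefficient at a monomial `m` is the
number of such tableaux with `x_T = m`). -/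
noncomputable def dualImm (J : Sentence A) : QSymA A := fun m =>
  (Set.ncard {f : Filling | IsCIT J f ∧ monoOf J f = m} : ℚ)

/-- The colored fundamental quasisymmetric function `F_I = Σ_{J ⪯ I} M_J`. -/
noncomputable def FQ (I : Sentence A) : QSymA A :=
  ∑ᶠ J ∈ {J : Sentence A | Refines J I}, MQ J

/-! ### The colored immaculate descent graph -/

/-- Edges of the colored immaculate descent graph: a directed edge from `I` to `J` (`J ≠ I`)
whenever some standard colored immaculate tableau of shape `I` has colored descent
composition `J`. -/
def IsEdge [Inhabited A] (I J : Sentence A) : Prop := J ≠ I ∧ LJC I J ≠ 0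

/-- Directed paths from `I` to `K` in the colored immaculate descent graph, recorded by
their (nonempty) lists of successive vertices; the path `[I]` is the empty path at `I`. -/
def PathsFromTo [Inhabited A] (I K : Sentence A) : Set (List (Sentence A)) :=
  {p | p.head? = some I ∧ p.getLast? = some K ∧ p.Chain' IsEdge}

/-- The signed weight `(-1)^{ℓ(𝒫)} prod(𝒫)` of a directed path `𝒫`:
`ℓ(𝒫)` is its number of edges and `prod(𝒫)` the product of its edge weights `L_{I,J}`. -/
noncomputable def pathWeight [Inhabited A] (p : List (Sentence A)) : ℚ :=
  ((-1 : ℚ)) ^ (p.length - 1) * ((p.zip p.tail).map (fun e => (LJC e.1 e.2 : ℚ))).prod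

/-- `L⁻¹_{I,K} = Σ_𝒫 (-1)^{ℓ(𝒫)} prod(𝒫)`, summed over all directed paths `𝒫`
from `I` to `K` in the colored immaculate descent graph. -/
noncomputable def Linv [Inhabited A] (I K : Sentence A) : ℚ :=
  ∑ᶠ p ∈ PathsFromTo I K, pathWeight p

/-! ### The colored noncommutative symmetric functions `NSym_A` -/

/-- A formal series over the complete homogeneous basis `{H_I}` of `NSym_A`, recorded by its
coefficient function on (weak) sentences.  `NSym_A` itself consists of the finitely
supported elements supported on genuine sentences; see `InNSym`. -/
abbrev NSymA (A : Type*) := Sentence A → ℚ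

/-- Membership in `NSym_A` proper: finitely supported, and supported on genuine sentences. -/
def InNSym (f : NSymA A) : Prop :=
  (Function.support f).Finite ∧ ∀ I, f I ≠ 0 → IsSentence I

open Classical in
/-- The colored complete homogeneous noncommutative symmetric function
`H_I = H_{w_1} ⋯ H_{w_k}`. -/
noncomputable def Hd (I : Sentence A) : NSymA A := fun J => if J = I then 1 else 0

/-- `H_w` for a single word `w`, with `H_∅ = 1`. -/
noncomputable def Hw (w : List A) : NSymA A := if w.isEmpty then Hd [] else Hd [w]

/-- Multiplication in `NSym_A` (the concatenation product, extended to series):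
`H_I · H_J = H_{I ⬝ J}`. -/
def mulN (f g : NSymA A) : NSymA A := fun I =>
  ∑ j ∈ Finset.range (I.length + 1), f (I.take j) * g (I.drop j)

/-- The duality pairing `⟨·,·⟩ : NSym_A × QSym_A → ℚ`, determined by
`⟨H_I, M_J⟩ = δ_{I,J}`: the `M_I`-coefficient of a quasisymmetric function is its
coefficient on the monomial `x_{w_1,1} x_{w_2,2} ⋯ x_{w_k,k}`. -/
noncomputable def pairNQ (G : NSymA A) (F : QSymA A) : ℚ :=
  ∑ᶠ I ∈ {I : Sentence A | IsSentence I}, G I * F (I, List.range' 1 I.length)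

/-- All ways of splitting each word of a list of words into a prefix and a suffix. -/
def splitsOf : List (List A) → List (List (List A) × List (List A))
  | [] => [([], [])]
  | w :: ws =>
      (((splitsOf ws).map (fun p =>
        (List.range (w.length + 1)).map (fun t => (w.take t :: p.1, w.drop t :: p.2))))).flatten

/-- Restriction of a candidate monomial: keep only the nonempty words together with
their indices. -/
def restrictMono (ws : List (List A)) (js : List ℕ) : Mono A :=
  let ps := (ws.zip js).filter (fun p => !p.1.isEmpty)
  (ps.map Prod.fst, ps.map Prod.snd)

/-- The product of colored quasisymmetric series: the coefficient of a monomial in `F·G`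
is the sum, over all ways of writing each of its words as a concatenation of a word of a
monomial of `F` (on the left) and a word of a monomial of `G` (on the right), of the
products of the corresponding coefficients. -/
def mulQ (F G : QSymA A) : QSymA A := fun m =>
  ((splitsOf m.1).map (fun p => F (restrictMono p.1 m.2) * G (restrictMono p.2 m.2))).sum

/-- The right perp operator `M^⊸` of `M ∈ QSym_A`, the linear operator on `NSym_A`
determined by `⟨M^⊸(H), G⟩ = ⟨H, G·M⟩`; explicitly, for the dual bases `{M_I}` and `{H_I}`,
`M^⊸(H) = Σ_I ⟨H, M_I · M⟩ H_I`. -/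
noncomputable def rperp (M : QSymA A) (H : NSymA A) : NSymA A :=
  ∑ᶠ I ∈ {I : Sentence A | IsSentence I}, pairNQ H (mulQ (MQ I) M) • Hd I

/-- The colored noncommutative Bernstein operator
`𝔹_v = Σ_u Σ_{Q : w(Q^r) = u} (-1)^{ℓ(Q)} H_{v·u} · (Σ_{S ⪰ Q} M_S^⊸)`,
where `Q` runs over all sentences, `u = w(Q^r)` is the concatenation of the words of `Q`
in reverse order, and `S` runs over all coarsenings of `Q`. -/
noncomputable def Bern (v : List A) (f : NSymA A) : NSymA A :=
  ∑ᶠ Q ∈ {Q : Sentence A | IsSentence Q},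
    ((-1 : ℚ)) ^ Q.length •
      mulN (Hw (v ++ Q.reverse.flatten))
        (∑ᶠ S ∈ {S : Sentence A | Refines Q S}, rperp (MQ S) f)

/-- The colored immaculate function `𝔖_J = 𝔹_{v_1} 𝔹_{v_2} ⋯ 𝔹_{v_h}(1)`. -/
noncomputable def ImmS (J : Sentence A) : NSymA A := J.foldr Bern (Hd [])

/-- The colored ribbon function `R_I = Σ_{J ⪰ I} (-1)^{ℓ(J) - ℓ(I)} H_J`. -/
noncomputable def Rib (I : Sentence A) : NSymA A :=
  ∑ᶠ J ∈ {J : Sentence A | Refines I J}, ((-1 : ℚ)) ^ (I.length - J.length) • Hd J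

/-- The Pieri relation `J ⊂_w K` for a sentence `J = (v_1, …, v_h)` and a word `w`:
`K = (u_1, …, u_g)` with `h ≤ g ≤ h+1` (setting `v_{h+1} = ∅`) and `u_j = v_j · q_j`
for words `q_j` (possibly empty) whose reversed concatenation `q_g ⋯ q_1` equals `w`. -/
def PieriRel (J : Sentence A) (w : List A) (K : Sentence A) : Prop :=
  J.length ≤ K.length ∧ K.length ≤ J.length + 1 ∧
  ∃ q : List (List A), q.length = K.length ∧ q.reverse.flatten = w ∧
    ∀ j < K.length, K.getD j [] = J.getD j [] ++ q.getD j []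

/-- Right containment of a weak sentence `K` in `J`: same length, and each word of `K` is a
suffix of the corresponding word of `J`. -/
def RightContained (K J : Sentence A) : Prop :=
  K.length = J.length ∧ ∀ i < J.length, (K.getD i []).IsSuffix (J.getD i [])

/-- The weak sentence `J/_R K`: remove each word of `K` from the right end of the
corresponding word of `J`. -/
def rightQuot (J K : Sentence A) : Sentence A :=
  List.zipWith (fun v u => v.take (v.length - u.length)) J K

/-- Left containment `J ⊆_L I`: `ℓ(J) ≤ ℓ(I)` and each word of `J` is a prefix of the
corresponding word of `I`. -/
def LeftContained (J I : Sentence A) : Prop :=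
  J.length ≤ I.length ∧ ∀ i < J.length, (J.getD i []).IsPrefix (I.getD i [])

/-- A skew colored immaculate tableau of shape `I/J`: a filling of the active boxes
(the `i`-th row keeps the last `|w_i| - |v_i|` boxes) with positive integers, rows weakly
increasing left to right, and the entries in the (active part of the) first column of `I`
strictly increasing top to bottom. -/
def IsSkewCIT (I J : Sentence A) (f : Filling) : Prop :=
  f.map List.length =
    (List.range I.length).map (fun i => (I.getD i []).length - (J.getD i []).length) ∧
  (∀ row ∈ f, row.Chain' (· ≤ ·)) ∧
  ((List.range I.length).filterMap
    (fun i => if (J.getD i []).length = 0 then (f.getD i []).head? else none)).Chain' (· < ·) ∧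
  (∀ x ∈ f.flatten, 1 ≤ x)

/-- The word of the type of a skew tableau at value `v`: the colors of the active boxes with
entry `v`, read left to right, bottom to top. -/
def skewTypeWord (I J : Sentence A) (f : Filling) (v : ℕ) : List A :=
  (((List.range I.length).reverse).map (fun i =>
    rowWith ((I.getD i []).drop (J.getD i []).length) (f.getD i []) v)).flatten

/-- `SkewHasType I J f K` : the skew tableau `f` of shape `I/J` has type `K`. -/
def SkewHasType (I J : Sentence A) (f : Filling) (K : Sentence A) : Prop :=
  ∀ v, 1 ≤ v → skewTypeWord I J f v = K.getD (v - 1) []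

/-! ### The complement involution `ψ` and the row-strict functions -/

/-- The complement `I^c` of a sentence: the unique sentence with the same maximal word
that splits exactly where `I` does not. -/
def complSent (I : Sentence A) : Sentence A :=
  let w := I.flatten
  let n := w.length
  if n = 0 then []
  else
    let splits := (((wl I).scanl (· + ·) 0).drop 1).dropLast
    let csplits := (List.range' 1 (n - 1)).filter (fun i => !(splits.contains i))
    splitByComp w (compOf csplits n)

/-- The `M_I`-coefficient of a colored quasisymmetric function. -/
noncomputable def coeffM (G : QSymA A) (I : Sentence A) : ℚ := G (I, List.range' 1 I.length)

/-- The image of `M_I` under `ψ`, via `M_I = Σ_{J ⪯ I} (-1)^{ℓ(J)-ℓ(I)} F_J` and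
`ψ(F_J) = F_{J^c}`. -/
noncomputable def psiM (I : Sentence A) : QSymA A :=
  ∑ᶠ J ∈ {J : Sentence A | Refines J I}, ((-1 : ℚ)) ^ (J.length - I.length) • FQ (complSent J)

/-- The linear involution `ψ` of `QSym_A`, determined by `ψ(F_I) = F_{I^c}`. -/
noncomputable def psiQ (G : QSymA A) : QSymA A :=
  ∑ᶠ I ∈ {I : Sentence A | IsSentence I}, coeffM G I • psiM I

/-- A colored row-strict immaculate tableau of shape `I`: entries strictly increase left to
right along each row and weakly increase top to bottom down the first column. -/
def IsCRSIT (I : Sentence A) (f : Filling) : Prop :=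
  f.map List.length = I.map List.length ∧
  (∀ row ∈ f, row.Chain' (· < ·)) ∧
  (f.filterMap List.head?).Chain' (· ≤ ·) ∧
  (∀ x ∈ f.flatten, 1 ≤ x)

/-- The word of the type of a row-strict tableau at value `v`: the colors of the boxes with
entry `v`, read left to right, top to bottom. -/
def rsTypeWord (I : Sentence A) (f : Filling) (v : ℕ) : List A :=
  ((I.zip f).map (fun p => rowWith p.1 p.2 v)).flatten

/-- The monomial `x_T` of a colored row-strict immaculate tableau. -/
def rsMonoOf (I : Sentence A) (f : Filling) : Mono A :=
  let vs := ((List.range (maxEntry f)).map (· + 1)).filter (fun v => !(rsTypeWord I f v).isEmpty)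
  (vs.map (rsTypeWord I f), vs)

/-- The colored row-strict dual immaculate function `ℛ𝔖*_J = Σ_T x_T`, summed over all
colored row-strict immaculate tableaux `T` of shape `J`. -/
noncomputable def rsDualImm (J : Sentence A) : QSymA A := fun m =>
  (Set.ncard {f : Filling | IsCRSIT J f ∧ rsMonoOf J f = m} : ℚ)

/-- `α ⪰ β` in the reverse lexicographic order on compositions: at the first index where
they differ, `α` has the *smaller* entry (padding with zeros). -/
def RevLexGE (α β : List ℕ) : Prop :=
  α = β ∨ ∃ i, (∀ j < i, α.getD j 0 = β.getD j 0) ∧ α.getD i 0 < β.getD i 0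

/-! ### Uncolored (ordinary) versions, for `QSym` -/

namespace Uncolored

/-- A composition: a list of positive integers. -/
def IsComposition (α : List ℕ) : Prop := ∀ a ∈ α, 1 ≤ a

/-- `β ⪯ α`: the composition `α` is obtained by summing adjacent parts of `β`. -/
def RefinesC (β α : List ℕ) : Prop :=
  ∃ P : List (List ℕ), (∀ p ∈ P, p ≠ []) ∧ P.flatten = β ∧ P.map List.sum = α

/-- A monomial `x_{i_1}^{a_1} ⋯ x_{i_m}^{a_m}` recorded by its exponents and its
strictly increasing positive indices. -/
abbrev MonoU := List ℕ × List ℕ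

/-- A quasisymmetric "series", recorded by its coefficient function on monomials.
`QSym` is the span of the monomial functions `MU α` inside this space. -/
abbrev QSymU := MonoU → ℚ

/-- Validity of a monomial: matching lengths, strictly increasing positive indices,
positive exponents. -/
def ValidMonoU (m : MonoU) : Prop :=
  m.1.length = m.2.length ∧ m.2.Chain' (· < ·) ∧ (∀ j ∈ m.2, 1 ≤ j) ∧ ∀ a ∈ m.1, 1 ≤ a

open Classical in
/-- The monomial quasisymmetric function `M_α`. -/
noncomputable def MU (α : List ℕ) : QSymU := fun m =>
  if m.1 = α ∧ ValidMonoU m then 1 else 0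

/-- The fundamental quasisymmetric function `F_α = Σ_{β ⪯ α} M_β`. -/
noncomputable def FU (α : List ℕ) : QSymU :=
  ∑ᶠ β ∈ {β : List ℕ | RefinesC β α}, MU β

/-- An immaculate tableau of shape `α`: positive integer entries, rows weakly increasing
left to right, first column strictly increasing top to bottom. -/
def IsIT (α : List ℕ) (f : Filling) : Prop :=
  f.map List.length = α ∧
  (∀ row ∈ f, row.Chain' (· ≤ ·)) ∧
  (f.filterMap List.head?).Chain' (· < ·) ∧
  (∀ x ∈ f.flatten, 1 ≤ x)

/-- The number of boxes of `f` with entry `v`. -/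
def countOf (f : Filling) (v : ℕ) : ℕ := (f.flatten.filter (fun x => x == v)).length

/-- The monomial `x^T` of an immaculate tableau `T` of type `β`:
`x_1^{β_1} ⋯ x_h^{β_h}` (zero exponents skipped). -/
def monoOfU (f : Filling) : MonoU :=
  let vs := ((List.range (maxEntry f)).map (· + 1)).filter (fun v => decide (countOf f v ≠ 0))
  (vs.map (countOf f), vs)

/-- The dual immaculate function `𝔖*_α = Σ_T x^T`, summed over all immaculate tableaux
of shape `α`. -/
noncomputable def dualImmU (α : List ℕ) : QSymU := fun m =>
  (Set.ncard {f : Filling | IsIT α f ∧ monoOfU f = m} : ℚ)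

/-- The descent composition `co(U)` of a standard immaculate tableau. -/
def descComp (f : Filling) : List ℕ :=
  if nBoxes f = 0 then [] else compOf (descList f) (nBoxes f)

/-- `L_{α,β}`: the number of standard immaculate tableaux of shape `α` with descent
composition `β`. -/
noncomputable def LU (α β : List ℕ) : ℕ :=
  Set.ncard {f : Filling | IsIT α f ∧ IsStandardF f ∧ descComp f = β}

/-- Edges of the immaculate descent graph `𝔇^n`. -/
def IsEdgeU (α β : List ℕ) : Prop := β ≠ α ∧ LU α β ≠ 0

/-- Directed paths from `α` to `β` in the immaculate descent graph, recorded by their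
lists of successive vertices; `[α]` is the empty path at `α`. -/
def PathsU (α β : List ℕ) : Set (List (List ℕ)) :=
  {p | p.head? = some α ∧ p.getLast? = some β ∧ p.Chain' IsEdgeU}

/-- The signed weight `(-1)^{ℓ(𝒫)} prod(𝒫)` of a path. -/
noncomputable def pathWeightU (p : List (List ℕ)) : ℚ :=
  ((-1 : ℚ)) ^ (p.length - 1) * ((p.zip p.tail).map (fun e => (LU e.1 e.2 : ℚ))).prod

/-- `L⁻¹_{α,β} = Σ_𝒫 (-1)^{ℓ(𝒫)} prod(𝒫)`, over directed paths from `α` to `β` in `𝔇^n`. -/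
noncomputable def LinvU (α β : List ℕ) : ℚ :=
  ∑ᶠ p ∈ PathsU α β, pathWeightU p

end Uncolored

end ColoredImm

namespace ColoredImm

/-!
Left multiplication by the Bernstein operator `𝔹_v` satisfies a commutation rule with right
multiplication by `H_w`, which gives the Pieri rule: `𝔖_J · H_w` is the sum of the `𝔖_K` over all
ways of placing the letters of `w`, in rows weakly going up, at the ends of rows of `J` or in a
single new row. Together with `R_{C·u} · H_w = R_{C·u·w} + R_{C·(uw)}`, peeling off the last word
of `C` shows `R_C = Σ_K L_{K,C} 𝔖_K`: placing letters one after the other builds a tableau of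
shape `K` entry by entry, and its descents are the places where `C` starts a new word.

The `k`-th word of `C` can only be placed in the first `k` rows, so the statistic
`Σ_r r · (length of row r)` strictly increases along the edges of the descent graph. The matrix
`L` is therefore unitriangular, and its inverse sums the signed weights of directed paths.
-/

section Sentences

variable {A : Type*}

theorem isSentence_nil : IsSentence ([] : Sentence A) := by simp [IsSentence]

theorem isSentence_append {I J : Sentence A} :
    IsSentence (I ++ J) ↔ IsSentence I ∧ IsSentence J :=
  List.forall_mem_append

theorem isSentence_cons {w : List A} {J : Sentence A} :
    IsSentence (w :: J) ↔ w ≠ [] ∧ IsSentence J :=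
  List.forall_mem_cons

theorem isSentence_singleton {w : List A} : IsSentence [w] ↔ w ≠ [] :=
  List.forall_mem_singleton

theorem isSentence_flattenWS (S : Sentence A) : IsSentence (flattenWS S) := by
  intro w hw
  simpa using (List.mem_filter.1 hw).2

theorem flattenWS_append (S T : Sentence A) :
    flattenWS (S ++ T) = flattenWS S ++ flattenWS T :=
  List.filter_append ..

theorem flattenWS_singleton {w : List A} (hw : w ≠ []) : flattenWS [w] = [w] := by
  simp [flattenWS, hw]

theorem IsSentence.eq_nil_of_flatten {Q : Sentence A} (hQ : IsSentence Q)
    (h : Q.flatten = []) : Q = [] := by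
  refine List.eq_nil_iff_forall_not_mem.2 fun w hw => hQ w hw ?_
  exact List.flatten_eq_nil_iff.1 h w hw

theorem IsSentence.append_inj {Q Q' R R' : Sentence A} (hQ : IsSentence Q) (hQ' : IsSentence Q')
    (hflat : Q.flatten = Q'.flatten) (h : Q ++ R = Q' ++ R') : Q = Q' ∧ R = R' := by
  rcases List.append_eq_append_iff.1 h with ⟨X, rfl, rfl⟩ | ⟨X, rfl, rfl⟩
  · obtain rfl : X = [] := (isSentence_append.1 hQ').2.eq_nil_of_flatten (by simpa using hflat)
    simp
  · obtain rfl : X = [] := (isSentence_append.1 hQ).2.eq_nil_of_flatten (by simpa using hflat)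
    simp

theorem Refines.flatten_eq {Q S : Sentence A} (h : Refines Q S) : Q.flatten = S.flatten := by
  obtain ⟨P, -, rfl, rfl⟩ := h
  exact List.flatten_flatten

theorem Refines.isSentence {Q S : Sentence A} (h : Refines Q S) (hQ : IsSentence Q) :
    IsSentence S := by
  obtain ⟨P, hP, rfl, rfl⟩ := h
  intro w hw
  obtain ⟨p, hp, rfl⟩ := List.mem_map.1 hw
  have hp' : IsSentence p := fun w hw => hQ w (List.mem_flatten_of_mem hp hw)
  exact fun hnil => hP p hp (hp'.eq_nil_of_flatten hnil)

theorem Refines.length_le {C S : Sentence A} (h : Refines C S) : S.length ≤ C.length := by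
  obtain ⟨P, hP, rfl, rfl⟩ := h
  rw [List.length_map, List.length_flatten, ← List.length_map (f := List.length)]
  refine List.length_le_sum_of_one_le _ fun n hn => ?_
  obtain ⟨p, hp, rfl⟩ := List.mem_map.1 hn
  exact List.length_pos_iff.2 (hP p hp)

theorem refines_nil_right {Q : Sentence A} : Refines Q [] ↔ Q = [] := by
  simp [Refines, eq_comm]

theorem refines_singleton_right {Q : Sentence A} {w : List A} :
    Refines Q [w] ↔ Q ≠ [] ∧ Q.flatten = w := by
  constructor
  · rintro ⟨P, hP, rfl, h⟩
    obtain ⟨p, rfl, rfl⟩ := List.map_eq_singleton_iff.1 h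
    simpa using hP
  · rintro ⟨hQ, rfl⟩
    exact ⟨[Q], by simpa using hQ, by simp, rfl⟩

theorem refines_append_right {Q S T : Sentence A} :
    Refines Q (S ++ T) ↔ ∃ Q₁ Q₂, Q = Q₁ ++ Q₂ ∧ Refines Q₁ S ∧ Refines Q₂ T := by
  constructor
  · rintro ⟨P, hP, rfl, h⟩
    obtain ⟨P₁, P₂, rfl, rfl, rfl⟩ := List.map_eq_append_iff.1 h
    rw [List.forall_mem_append] at hP
    exact ⟨P₁.flatten, P₂.flatten, List.flatten_append, ⟨P₁, hP.1, rfl, rfl⟩,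
      ⟨P₂, hP.2, rfl, rfl⟩⟩
  · rintro ⟨-, -, rfl, ⟨P₁, hP₁, rfl, rfl⟩, ⟨P₂, hP₂, rfl, rfl⟩⟩
    exact ⟨P₁ ++ P₂, List.forall_mem_append.2 ⟨hP₁, hP₂⟩, List.flatten_append, List.map_append⟩

open Classical in
/-- The finite set of all sentences whose letters, read in order, spell the word `t`. -/
noncomputable def segmentations (t : List A) : Finset (Sentence A) :=
  Finset.univ.image fun c : Composition t.length => t.splitWrtComposition c

theorem mem_segmentations {t : List A} {Q : Sentence A} :
    Q ∈ segmentations t ↔ IsSentence Q ∧ Q.flatten = t := by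
  simp only [segmentations, Finset.mem_image, Finset.mem_univ, true_and]
  constructor
  · rintro ⟨c, rfl⟩
    exact ⟨fun w hw => List.length_pos_iff.1 (List.length_pos_of_mem_splitWrtComposition hw),
      List.flatten_splitWrtComposition t c⟩
  · rintro ⟨hQ, rfl⟩
    refine ⟨⟨Q.map List.length, fun hi => ?_, List.length_flatten.symm⟩,
      List.splitWrtComposition_flatten Q _ rfl⟩
    obtain ⟨w, hw, rfl⟩ := List.mem_map.1 hi
    exact List.length_pos_iff.2 (hQ w hw)

theorem segmentations_nil : segmentations ([] : List A) = {[]} := by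
  ext Q
  rw [mem_segmentations, Finset.mem_singleton]
  constructor
  · exact fun h => h.1.eq_nil_of_flatten h.2
  · rintro rfl
    exact ⟨isSentence_nil, rfl⟩

theorem sum_segmentations {M : Type*} [AddCommMonoid M] {t : List A} (ht : t ≠ [])
    (F : Sentence A → M) :
    ∑ Q ∈ segmentations t, F Q =
      ∑ i ∈ Finset.range t.length, ∑ Q ∈ segmentations (t.take i), F (Q ++ [t.drop i]) := by
  rw [Finset.sum_sigma']
  symm
  refine Finset.sum_bij (fun x _ => x.2 ++ [t.drop x.1]) ?_ ?_ ?_ (fun _ _ => rfl)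
  · rintro ⟨i, Q⟩ h
    simp only [Finset.mem_sigma, Finset.mem_range, mem_segmentations] at h
    obtain ⟨hi, hQ, hflat⟩ := h
    rw [mem_segmentations, isSentence_append, isSentence_singleton]
    exact ⟨⟨hQ, by simpa using hi⟩, by simp [hflat]⟩
  · rintro ⟨i, Q⟩ h ⟨j, Q'⟩ h' heq
    simp only [Finset.mem_sigma, Finset.mem_range] at h h'
    obtain ⟨rfl, hdrop⟩ := List.append_inj' heq rfl
    have hlen := congrArg List.length (List.cons.inj hdrop).1
    obtain rfl : i = j := by simp only [List.length_drop] at hlen; omega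
    rfl
  · intro Q h
    obtain ⟨hQ, rfl⟩ := mem_segmentations.1 h
    rcases List.eq_nil_or_concat' Q with rfl | ⟨Q', s, rfl⟩
    · simp at ht
    · rw [isSentence_append, isSentence_singleton] at hQ
      have hs := List.length_pos_iff.2 hQ.2
      refine ⟨⟨Q'.flatten.length, Q'⟩, ?_, by simp⟩
      simpa [mem_segmentations, hQ.1] using hs

-- The terms cancel in pairs: the first word of `Q.reverse` may be glued to the word before it.
theorem sum_segmentations_alternating {M : Type*} [AddCommGroup M] [Module ℚ M] (x : List A)
    (g : List A → M) :
    ∑ j ∈ Finset.range (x.length + 1), ∑ Q ∈ segmentations (x.take j),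
      ((-1 : ℚ) ^ Q.length) • g (x.drop j ++ Q.reverse.flatten) = if x = [] then g [] else 0 := by
  split_ifs with hx
  · subst hx
    simp [segmentations_nil]
  · rw [Finset.sum_range_succ, List.take_length, sum_segmentations hx,
      ← Finset.sum_add_distrib]
    refine Finset.sum_eq_zero fun i _ => ?_
    rw [← Finset.sum_add_distrib]
    exact Finset.sum_eq_zero fun Q _ => by simp [pow_succ]

open Classical in
/-- The finite set of all sentences that refine `S`. -/
noncomputable def refinements (S : Sentence A) : Finset (Sentence A) :=
  (segmentations S.flatten).filter (Refines · S)

theorem mem_refinements {S Q : Sentence A} :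
    Q ∈ refinements S ↔ IsSentence Q ∧ Refines Q S := by
  simp only [refinements, Finset.mem_filter, mem_segmentations]
  exact ⟨fun h => ⟨h.1.1, h.2⟩, fun h => ⟨⟨h.1, h.2.flatten_eq⟩, h.2⟩⟩

theorem refinements_nil : refinements ([] : Sentence A) = {[]} := by
  ext Q
  rw [mem_refinements, refines_nil_right, Finset.mem_singleton]
  exact and_iff_right_of_imp fun h => h ▸ isSentence_nil

theorem refinements_flattenWS_singleton (w : List A) :
    refinements (flattenWS [w]) = segmentations w := by
  by_cases hw : w = []
  · subst hw
    rw [segmentations_nil, ← refinements_nil]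
    rfl
  · ext Q
    rw [flattenWS_singleton hw, mem_refinements, mem_segmentations, refines_singleton_right]
    refine and_congr_right fun _ => and_iff_right_of_imp ?_
    rintro rfl rfl
    exact hw rfl

theorem sum_refinements_append {M : Type*} [AddCommMonoid M] (S T : Sentence A)
    (F : Sentence A → M) :
    ∑ Q ∈ refinements (S ++ T), F Q =
      ∑ Q₁ ∈ refinements S, ∑ Q₂ ∈ refinements T, F (Q₁ ++ Q₂) := by
  rw [← Finset.sum_product']
  symm
  refine Finset.sum_bij (fun x _ => x.1 ++ x.2) ?_ ?_ ?_ (fun _ _ => rfl)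
  · rintro ⟨Q₁, Q₂⟩ h
    simp only [Finset.mem_product, mem_refinements] at h
    rw [mem_refinements, isSentence_append, refines_append_right]
    exact ⟨⟨h.1.1, h.2.1⟩, Q₁, Q₂, rfl, h.1.2, h.2.2⟩
  · rintro ⟨Q₁, Q₂⟩ h ⟨Q₁', Q₂'⟩ h' heq
    simp only [Finset.mem_product, mem_refinements] at h h'
    exact Prod.ext_iff.2 <|
      h.1.1.append_inj h'.1.1 (h.1.2.flatten_eq.trans h'.1.2.flatten_eq.symm) heq
  · intro Q h
    obtain ⟨hQ, href⟩ := mem_refinements.1 h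
    obtain ⟨Q₁, Q₂, rfl, h₁, h₂⟩ := refines_append_right.1 href
    rw [isSentence_append] at hQ
    exact ⟨(Q₁, Q₂), by simp [mem_refinements, hQ.1, hQ.2, h₁, h₂], rfl⟩

open Classical in
/-- The finite set of all coarsenings of the sentence `C`. -/
noncomputable def coarsenings (C : Sentence A) : Finset (Sentence A) :=
  (segmentations C.flatten).filter (Refines C)

theorem mem_coarsenings {C : Sentence A} (hC : IsSentence C) {S : Sentence A} :
    S ∈ coarsenings C ↔ Refines C S := by
  simp only [coarsenings, Finset.mem_filter, mem_segmentations]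
  exact ⟨fun h => h.2, fun h => ⟨⟨h.isSentence hC, h.flatten_eq.symm⟩, h⟩⟩

end Sentences

section SplitSum

variable {A M N : Type*} [AddCommMonoid M] [AddCommMonoid N]

/-- The sum of `F (p, s)` over all ways of cutting every word of `K` into a prefix and a suffix,
`p` being the list of prefixes and `s` the list of suffixes. These pairs, with their empty words
deleted, index the coproduct of `H_K`. -/
def splitSum (K : Sentence A) (F : Sentence A × Sentence A → M) : M :=
  ((splitsOf K).map F).sum

theorem splitSum_nil (F : Sentence A × Sentence A → M) : splitSum [] F = F ([], []) := by
  simp [splitSum, splitsOf]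

theorem splitSum_cons (w : List A) (K : Sentence A) (F : Sentence A × Sentence A → M) :
    splitSum (w :: K) F = splitSum K fun p =>
      ∑ t ∈ Finset.range (w.length + 1), F (w.take t :: p.1, w.drop t :: p.2) := by
  rw [splitSum, splitsOf, List.map_flatten, List.sum_flatten, List.map_map, List.map_map]
  refine congrArg List.sum (List.map_congr_left fun p _ => ?_)
  simp only [Function.comp_apply, List.map_map]
  exact (Multiset.sum_coe _).symm

theorem splitSum_append_singleton (K : Sentence A) (w : List A)
    (F : Sentence A × Sentence A → M) :
    splitSum (K ++ [w]) F = splitSum K fun p =>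
      ∑ t ∈ Finset.range (w.length + 1), F (p.1 ++ [w.take t], p.2 ++ [w.drop t]) := by
  induction K generalizing F with
  | nil => simp [splitSum_cons, splitSum_nil]
  | cons u K ih =>
    rw [List.cons_append, splitSum_cons, ih, splitSum_cons]
    refine congrArg (splitSum K) (funext fun p => ?_)
    rw [Finset.sum_comm]
    rfl

theorem splitSum_congr {K : Sentence A} {F G : Sentence A × Sentence A → M}
    (h : ∀ p ∈ splitsOf K, F p = G p) : splitSum K F = splitSum K G := by
  rw [splitSum, splitSum, List.map_congr_left h]

theorem splitSum_sum {ι : Type*} (K : Sentence A) (s : Finset ι)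
    (F : ι → Sentence A × Sentence A → M) :
    splitSum K (fun p => ∑ i ∈ s, F i p) = ∑ i ∈ s, splitSum K (F i) := by
  unfold splitSum
  induction splitsOf K with
  | nil => simp
  | cons p l ih => simp [ih, Finset.sum_add_distrib]

theorem map_splitSum {Φ : Type*} [FunLike Φ M N] [AddMonoidHomClass Φ M N] (φ : Φ)
    (K : Sentence A) (F : Sentence A × Sentence A → M) :
    φ (splitSum K F) = splitSum K fun p => φ (F p) := by
  rw [splitSum, map_list_sum, List.map_map]
  rfl

theorem smul_splitSum [Module ℚ M] (c : ℚ) (K : Sentence A) (F : Sentence A × Sentence A → M) :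
    c • splitSum K F = splitSum K fun p => c • F p :=
  map_splitSum (LinearMap.lsmul ℚ M c) K F

end SplitSum

section Bernstein

variable {A : Type*}

/-- Elements of `NSym_A` as finitely supported coefficient functions on the basis `H_I`.
Unlike `NSymA`, this space has the `H_I` as a basis, so linear maps on it are determined by
their values there. -/
abbrev FinNSym (A : Type*) := Sentence A →₀ ℚ

/-- The linear extension of `H_K ↦ splitSum K F`. -/
noncomputable def coproductSum {M : Type*} [AddCommMonoid M] [Module ℚ M]
    (F : Sentence A × Sentence A → M) : FinNSym A →ₗ[ℚ] M :=
  Finsupp.linearCombination ℚ fun K => splitSum K F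

/-- The Bernstein operator `𝔹_v` on finitely supported elements, written out on the basis `H_K`:
the suffixes removed from `K` are refined to a sentence `Q`, whose words are glued to `v` in
reverse order. -/
noncomputable def bernstein (v : List A) : FinNSym A →ₗ[ℚ] FinNSym A :=
  coproductSum fun p => ∑ Q ∈ refinements (flattenWS p.2), ((-1 : ℚ) ^ Q.length) •
    Finsupp.single (flattenWS [v ++ Q.reverse.flatten] ++ flattenWS p.1) (1 : ℚ)

/-- Right multiplication by `H_w`, where `H_∅ = 1`. -/
noncomputable def mulHRight (w : List A) : FinNSym A →ₗ[ℚ] FinNSym A :=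
  Finsupp.lmapDomain ℚ ℚ (· ++ flattenWS [w])

theorem mulHRight_single (w : List A) (K : Sentence A) (c : ℚ) :
    mulHRight w (Finsupp.single K c) = Finsupp.single (K ++ flattenWS [w]) c := by
  simp [mulHRight]

theorem mulHRight_nil (f : FinNSym A) : mulHRight [] f = f := by
  simp [mulHRight, flattenWS, ← Function.id_def]

theorem bernstein_single (v : List A) (K : Sentence A) :
    bernstein v (Finsupp.single K 1) = splitSum K fun p =>
      ∑ Q ∈ refinements (flattenWS p.2), ((-1 : ℚ) ^ Q.length) •
        Finsupp.single (flattenWS [v ++ Q.reverse.flatten] ++ flattenWS p.1) (1 : ℚ) := by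
  simp [bernstein, coproductSum]

theorem bernstein_one (v : List A) :
    bernstein v (Finsupp.single [] 1) = Finsupp.single (flattenWS [v]) 1 := by
  simp [bernstein_single, splitSum_nil, flattenWS, refinements_nil]

theorem bernstein_single_append_singleton (v : List A) (K : Sentence A) (w : List A) :
    bernstein v (Finsupp.single (K ++ [w]) 1) =
      ∑ t ∈ Finset.range (w.length + 1), ∑ Q ∈ segmentations (w.drop t), ((-1 : ℚ) ^ Q.length) •
        mulHRight (w.take t) (bernstein (v ++ Q.reverse.flatten) (Finsupp.single K 1)) := by
  simp only [bernstein_single, splitSum_append_singleton, splitSum_sum, map_splitSum,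
    smul_splitSum]
  refine Finset.sum_congr rfl fun t _ => ?_
  rw [← splitSum_sum]
  refine congrArg (splitSum K) (funext fun p => ?_)
  rw [flattenWS_append, sum_refinements_append, Finset.sum_comm,
    refinements_flattenWS_singleton]
  refine Finset.sum_congr rfl fun Q _ => ?_
  rw [map_sum, Finset.smul_sum]
  refine Finset.sum_congr rfl fun Q' _ => ?_
  rw [map_smul, mulHRight_single, smul_smul, ← pow_add, flattenWS_append, List.length_append,
    add_comm Q.length, List.reverse_append, List.flatten_append, List.append_assoc,
    List.append_assoc]

theorem bernstein_single_append_flattenWS (v : List A) (K : Sentence A) (w : List A) :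
    bernstein v (Finsupp.single (K ++ flattenWS [w]) 1) =
      ∑ t ∈ Finset.range (w.length + 1), ∑ Q ∈ segmentations (w.drop t), ((-1 : ℚ) ^ Q.length) •
        mulHRight (w.take t) (bernstein (v ++ Q.reverse.flatten) (Finsupp.single K 1)) := by
  by_cases hw : w = []
  · subst hw
    simp [flattenWS, segmentations_nil, mulHRight_nil]
  · rw [flattenWS_singleton hw, bernstein_single_append_singleton]

theorem bernstein_drop_single_append_take (v w : List A) (K : Sentence A) {i : ℕ}
    (hi : i ≤ w.length) :
    bernstein (v ++ w.drop i) (Finsupp.single (K ++ flattenWS [w.take i]) 1) =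
      ∑ t ∈ Finset.range (i + 1), ∑ Q ∈ segmentations ((w.drop t).take (i - t)),
        ((-1 : ℚ) ^ Q.length) • mulHRight (w.take t)
          (bernstein (v ++ ((w.drop t).drop (i - t) ++ Q.reverse.flatten))
            (Finsupp.single K 1)) := by
  rw [bernstein_single_append_flattenWS, List.length_take_of_le hi]
  refine Finset.sum_congr rfl fun t ht => ?_
  have hti : t ≤ i := Nat.lt_succ_iff.1 (Finset.mem_range.1 ht)
  rw [List.drop_take, List.take_take, min_eq_left hti, List.drop_drop, Nat.add_sub_cancel' hti]
  simp only [List.append_assoc]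

theorem mulHRight_bernstein_single (v w : List A) (K : Sentence A) :
    mulHRight w (bernstein v (Finsupp.single K 1)) =
      ∑ i ∈ Finset.range (w.length + 1),
        bernstein (v ++ w.drop i) (Finsupp.single (K ++ flattenWS [w.take i]) 1) := by
  let B (t : ℕ) (u : List A) : FinNSym A :=
    mulHRight (w.take t) (bernstein (v ++ u) (Finsupp.single K 1))
  have cancel (t : ℕ) (ht : t ∈ Finset.range (w.length + 1)) :
      ∑ j ∈ Finset.range (w.length + 1 - t), ∑ Q ∈ segmentations ((w.drop t).take j),
        ((-1 : ℚ) ^ Q.length) • B t ((w.drop t).drop j ++ Q.reverse.flatten) =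
      if w.drop t = [] then B t [] else 0 := by
    have hlen : w.length + 1 - t = (w.drop t).length + 1 := by
      rw [Finset.mem_range] at ht
      rw [List.length_drop]
      omega
    rw [hlen, sum_segmentations_alternating]
  symm
  rw [Finset.sum_congr rfl fun i hi =>
      bernstein_drop_single_append_take v w K (Nat.lt_succ_iff.1 (Finset.mem_range.1 hi)),
    Finset.sum_range_diag_flip (w.length + 1) fun t j => ∑ Q ∈ segmentations ((w.drop t).take j),
      ((-1 : ℚ) ^ Q.length) • B t ((w.drop t).drop j ++ Q.reverse.flatten),
    Finset.sum_congr rfl cancel, Finset.sum_range_succ, Finset.sum_eq_zero fun t ht => ?_]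
  · simp [B]
  · simpa using fun h => absurd (Finset.mem_range.1 ht) (not_lt.2 h)

theorem mulHRight_bernstein (v w : List A) (f : FinNSym A) :
    mulHRight w (bernstein v f) =
      ∑ i ∈ Finset.range (w.length + 1), bernstein (v ++ w.drop i) (mulHRight (w.take i) f) := by
  have h : mulHRight w ∘ₗ bernstein v =
      ∑ i ∈ Finset.range (w.length + 1), bernstein (v ++ w.drop i) ∘ₗ mulHRight (w.take i) := by
    refine Finsupp.lhom_ext' fun K => LinearMap.ext_ring ?_
    simpa [LinearMap.sum_apply, mulHRight_single] using mulHRight_bernstein_single v w K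
  simpa [LinearMap.sum_apply] using LinearMap.congr_fun h f

/-- The colored immaculate function `𝔖_J` as a finitely supported element. -/
noncomputable def immaculate (J : Sentence A) : FinNSym A :=
  J.foldr (fun v f => bernstein v f) (Finsupp.single [] 1)

theorem immaculate_nil : immaculate ([] : Sentence A) = Finsupp.single [] 1 :=
  rfl

theorem immaculate_cons (v : List A) (J : Sentence A) :
    immaculate (v :: J) = bernstein v (immaculate J) :=
  rfl

theorem immaculate_flattenWS_singleton (w : List A) :
    immaculate (flattenWS [w]) = Finsupp.single (flattenWS [w]) 1 := by
  by_cases hw : w = []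
  · subst hw
    rfl
  · rw [flattenWS_singleton hw, immaculate_cons, immaculate, List.foldr_nil, bernstein_one,
      flattenWS_singleton hw]

end Bernstein

section Placements

variable {A : Type*}

/-- Append the letter `x.1` at the end of row `x.2` of the diagram `J` (rows are numbered from `0`);
if `J` has no such row, the letter forms a new last row. -/
def appendLetter (J : Sentence A) (x : A × ℕ) : Sentence A :=
  if x.2 < J.length then J.modify x.2 (· ++ [x.1]) else J ++ [[x.1]]

/-- The placement of the letter of `x` one row further down. -/
def raiseRow (x : A × ℕ) : A × ℕ := (x.1, x.2 + 1)

/-- The placement of a letter in the first row. -/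
def inFirstRow (a : A) : A × ℕ := (a, 0)

/-- A sequence of placements is row-antitone if no letter is placed strictly below an earlier one;
these are the sequences without descents. -/
def RowAntitone (t : List (A × ℕ)) : Prop :=
  t.Pairwise fun x y => y.2 ≤ x.2

theorem raiseRow_injective : Function.Injective (raiseRow : A × ℕ → A × ℕ) := by
  rintro ⟨a, i⟩ ⟨b, j⟩ h
  simpa [raiseRow] using h

theorem inFirstRow_injective : Function.Injective (inFirstRow : A → A × ℕ) :=
  fun _ _ h => (Prod.ext_iff.1 h).1

theorem map_fst_raiseRow_append_inFirstRow (t : List (A × ℕ)) (s : List A) :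
    (t.map raiseRow ++ s.map inFirstRow).map Prod.fst = t.map Prod.fst ++ s := by
  simp [Function.comp_def, raiseRow, inFirstRow]

theorem rowAntitone_raiseRow_append_inFirstRow {t : List (A × ℕ)} {s : List A} :
    RowAntitone (t.map raiseRow ++ s.map inFirstRow) ↔ RowAntitone t := by
  simp [RowAntitone, List.pairwise_append, List.pairwise_map, raiseRow, inFirstRow,
    List.pairwise_of_forall]

theorem forall_rows_le_zero_iff {t : List (A × ℕ)} :
    (∀ x ∈ t, x.2 ≤ 0) ↔ (t.map Prod.fst).map inFirstRow = t := by
  induction t with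
  | nil => simp
  | cons x t ih =>
    rw [List.forall_mem_cons, ih, List.map_cons, List.map_cons, List.cons.injEq]
    exact and_congr_left' (by simp [inFirstRow, Prod.ext_iff, eq_comm])

theorem forall_rows_raiseRow_append_le {t : List (A × ℕ)} {s : List A} {h : ℕ} :
    (∀ x ∈ t.map raiseRow ++ s.map inFirstRow, x.2 ≤ h + 1) ↔ ∀ x ∈ t, x.2 ≤ h := by
  simp only [List.forall_mem_append, List.forall_mem_map, raiseRow, inFirstRow,
    Nat.add_le_add_iff_right, Nat.zero_le, implies_true, and_true]

theorem RowAntitone.exists_eq_raiseRow_append {t : List (A × ℕ)} (ht : RowAntitone t) :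
    ∃ (t' : List (A × ℕ)) (s : List A), t = t'.map raiseRow ++ s.map inFirstRow := by
  induction t with
  | nil => exact ⟨[], [], rfl⟩
  | cons x t ih =>
    obtain ⟨hx, htail⟩ := List.pairwise_cons.1 ht
    obtain ⟨a, _ | k⟩ := x
    · refine ⟨[], a :: t.map Prod.fst, ?_⟩
      rw [List.map_cons, forall_rows_le_zero_iff.1 hx]
      rfl
    · obtain ⟨t', s, rfl⟩ := ih htail
      exact ⟨(a, k) :: t', s, rfl⟩

theorem raiseRow_append_inFirstRow_inj {t t' : List (A × ℕ)} {s s' : List A}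
    (h : t.map raiseRow ++ s.map inFirstRow = t'.map raiseRow ++ s'.map inFirstRow) :
    t = t' ∧ s = s' := by
  have disjoint {u : List (A × ℕ)} {r r' : List A}
      (h : u.map raiseRow ++ r.map inFirstRow = r'.map inFirstRow) : u = [] := by
    refine List.eq_nil_iff_forall_not_mem.2 fun x hx => ?_
    have hmem : raiseRow x ∈ r'.map inFirstRow :=
      h ▸ List.mem_append_left _ (List.mem_map_of_mem hx)
    obtain ⟨a, -, ha⟩ := List.mem_map.1 hmem
    exact Nat.succ_ne_zero _ (Prod.ext_iff.1 ha).2.symm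
  induction t generalizing t' with
  | nil =>
    obtain rfl : t' = [] := disjoint h.symm
    exact ⟨rfl, inFirstRow_injective.list_map (by simpa using h)⟩
  | cons x t ih =>
    cases t' with
    | nil => exact absurd (disjoint h) (List.cons_ne_nil _ _)
    | cons y t' =>
      simp only [List.map_cons, List.cons_append, List.cons.injEq] at h
      obtain ⟨rfl, rfl⟩ := ih h.2
      exact ⟨congrArg (· :: t) (raiseRow_injective h.1), rfl⟩

open Classical in
/-- The ways to place the letters of `w`, in order and without descents, into the rows `0, …, h`. -/
noncomputable def rowPlacements : ℕ → List A → Finset (List (A × ℕ))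
  | 0, w => {w.map inFirstRow}
  | h + 1, w => (Finset.range (w.length + 1)).biUnion fun i =>
      (rowPlacements h (w.take i)).image fun t => t.map raiseRow ++ (w.drop i).map inFirstRow

theorem mem_rowPlacements {h : ℕ} {w : List A} {t : List (A × ℕ)} :
    t ∈ rowPlacements h w ↔ t.map Prod.fst = w ∧ RowAntitone t ∧ ∀ x ∈ t, x.2 ≤ h := by
  induction h generalizing w t with
  | zero =>
    rw [rowPlacements, Finset.mem_singleton, forall_rows_le_zero_iff]
    constructor
    · rintro rfl
      have hfst := map_fst_raiseRow_append_inFirstRow [] w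
      have hanti := (rowAntitone_raiseRow_append_inFirstRow (t := []) (s := w)).2 List.Pairwise.nil
      rw [List.map_nil, List.nil_append] at hfst hanti
      exact ⟨hfst, hanti, congrArg _ hfst⟩
    · rintro ⟨rfl, -, h⟩
      exact h.symm
  | succ h ih =>
    simp only [rowPlacements, Finset.mem_biUnion, Finset.mem_image, ih, Finset.mem_range]
    constructor
    · rintro ⟨i, -, t, ⟨hfst, hanti, hle⟩, rfl⟩
      rw [map_fst_raiseRow_append_inFirstRow, hfst, List.take_append_drop]
      exact ⟨rfl, rowAntitone_raiseRow_append_inFirstRow.2 hanti,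
        forall_rows_raiseRow_append_le.2 hle⟩
    · rintro ⟨rfl, hanti, hle⟩
      obtain ⟨t, s, rfl⟩ := hanti.exists_eq_raiseRow_append
      rw [map_fst_raiseRow_append_inFirstRow]
      exact ⟨t.length, by simp, t, ⟨by simp, rowAntitone_raiseRow_append_inFirstRow.1 hanti,
        forall_rows_raiseRow_append_le.1 hle⟩, by simp⟩

theorem sum_rowPlacements_succ {M : Type*} [AddCommMonoid M] (h : ℕ) (w : List A)
    (F : List (A × ℕ) → M) :
    ∑ t ∈ rowPlacements (h + 1) w, F t =
      ∑ i ∈ Finset.range (w.length + 1), ∑ t ∈ rowPlacements h (w.take i),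
        F (t.map raiseRow ++ (w.drop i).map inFirstRow) := by
  classical
  rw [rowPlacements, Finset.sum_biUnion]
  · exact Finset.sum_congr rfl fun i _ =>
      Finset.sum_image fun t _ t' _ heq => (raiseRow_append_inFirstRow_inj heq).1
  · intro i hi j hj hij
    rw [Function.onFun, Finset.disjoint_left]
    intro t ht ht'
    obtain ⟨t₁, -, rfl⟩ := Finset.mem_image.1 ht
    obtain ⟨t₂, -, heq⟩ := Finset.mem_image.1 ht'
    have hlen := congrArg List.length (raiseRow_append_inFirstRow_inj heq).2
    simp only [Finset.coe_range, Set.mem_Iio, List.length_drop] at hi hj hlen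
    omega

theorem appendLetter_cons_raiseRow (v : List A) (J : Sentence A) (x : A × ℕ) :
    appendLetter (v :: J) (raiseRow x) = v :: appendLetter J x := by
  simp only [appendLetter, raiseRow, List.length_cons, Nat.add_lt_add_iff_right]
  split_ifs <;> rfl

theorem foldl_appendLetter_cons_raiseRow (v : List A) (J : Sentence A) (t : List (A × ℕ)) :
    (t.map raiseRow).foldl appendLetter (v :: J) = v :: t.foldl appendLetter J := by
  induction t generalizing J with
  | nil => rfl
  | cons x t ih => simp [appendLetter_cons_raiseRow, ih]

theorem foldl_appendLetter_cons_inFirstRow (v : List A) (J : Sentence A) (s : List A) :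
    (s.map inFirstRow).foldl appendLetter (v :: J) = (v ++ s) :: J := by
  induction s generalizing v with
  | nil => simp
  | cons a s ih =>
    have hstep : appendLetter (v :: J) (inFirstRow a) = (v ++ [a]) :: J := by
      simp [appendLetter, inFirstRow]
    simp [hstep, ih]

theorem foldl_appendLetter_nil_inFirstRow (s : List A) :
    (s.map inFirstRow).foldl appendLetter [] = flattenWS [s] := by
  cases s with
  | nil => rfl
  | cons a s => exact foldl_appendLetter_cons_inFirstRow [a] [] s

theorem mulHRight_immaculate (J : Sentence A) (w : List A) :
    mulHRight w (immaculate J) =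
      ∑ t ∈ rowPlacements J.length w, immaculate (t.foldl appendLetter J) := by
  induction J generalizing w with
  | nil =>
    rw [List.length_nil, rowPlacements, Finset.sum_singleton, foldl_appendLetter_nil_inFirstRow,
      immaculate_flattenWS_singleton]
    exact mulHRight_single w [] 1
  | cons v J ih =>
    rw [immaculate_cons, mulHRight_bernstein, List.length_cons, sum_rowPlacements_succ]
    refine Finset.sum_congr rfl fun i _ => ?_
    rw [ih, map_sum]
    refine Finset.sum_congr rfl fun t _ => ?_
    rw [List.foldl_append, foldl_appendLetter_cons_raiseRow, foldl_appendLetter_cons_inFirstRow,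
      immaculate_cons]

end Placements

section FiniteSums

variable {ι κ R M : Type*} [Semiring R] [AddCommMonoid M] [Module R M]

theorem finsum_mem_linearCombination (s : Set ι) (G : ι → κ → M) (μ : κ →₀ R)
    (hG : ∀ k, (s ∩ Function.support fun i => G i k).Finite) :
    ∑ᶠ i ∈ s, Finsupp.linearCombination R (G i) μ =
      Finsupp.linearCombination R (fun k => ∑ᶠ i ∈ s, G i k) μ := by
  have hfin (k : κ) : Function.HasFiniteSupport (s.indicator fun i => G i k) := by
    rw [Function.HasFiniteSupport, Set.support_indicator]
    exact hG k
  have hterm (i : ι) : s.indicator (fun i => ∑ k ∈ μ.support, μ k • G i k) i =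
      ∑ k ∈ μ.support, μ k • s.indicator (fun i => G i k) i := by
    by_cases hi : i ∈ s <;> simp [hi]
  simp only [Finsupp.linearCombination_apply, Finsupp.sum, finsum_mem_def, hterm]
  rw [finsum_sum_comm]
  · exact Finset.sum_congr rfl fun k _ => (smul_finsum' _ (hfin k)).symm
  · exact fun k _ => (hfin k).subset (Function.support_const_smul_subset _ _)

end FiniteSums

section Coproduct

variable {A M N : Type*} [AddCommMonoid M] [Module ℚ M] [AddCommMonoid N] [Module ℚ N]

theorem coproductSum_apply (F : Sentence A × Sentence A → M) (f : FinNSym A) :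
    coproductSum F f = f.sum fun K c => c • splitSum K F :=
  Finsupp.linearCombination_apply ..

theorem map_coproductSum (φ : M →ₗ[ℚ] N) (F : Sentence A × Sentence A → M) (f : FinNSym A) :
    φ (coproductSum F f) = coproductSum (fun p => φ (F p)) f := by
  simp only [coproductSum_apply, map_finsuppSum, map_smul, map_splitSum]

theorem coproductSum_eq_linearCombination (F : Sentence A × Sentence A → M) (f : FinNSym A) :
    coproductSum F f =
      Finsupp.linearCombination ℚ F (coproductSum (fun p => Finsupp.single p (1 : ℚ)) f) := by
  rw [map_coproductSum]
  simp only [Finsupp.linearCombination_single, one_smul]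

theorem finsum_mem_coproductSum {ι : Type*} (s : Set ι) (G : ι → Sentence A × Sentence A → M)
    (f : FinNSym A) (hG : ∀ p, (s ∩ Function.support fun i => G i p).Finite) :
    ∑ᶠ i ∈ s, coproductSum (G i) f = coproductSum (fun p => ∑ᶠ i ∈ s, G i p) f := by
  rw [coproductSum_eq_linearCombination (fun p => ∑ᶠ i ∈ s, G i p),
    ← finsum_mem_linearCombination s G _ hG]
  exact finsum_mem_congr rfl fun i _ => coproductSum_eq_linearCombination (G i) f

theorem coproductSum_mem {p : Submodule ℚ M} {F : Sentence A × Sentence A → M}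
    (hF : ∀ x, F x ∈ p) (f : FinNSym A) : coproductSum F f ∈ p := by
  rw [coproductSum_apply]
  refine Submodule.finsuppSum_mem _ _ _ _ fun K _ => p.smul_mem _ (p.list_sum_mem fun y hy => ?_)
  obtain ⟨x, -, rfl⟩ := List.mem_map.1 hy
  exact hF x

end Coproduct

section BernsteinComparison

variable {A : Type*}

theorem coe_single_one (K : Sentence A) : ⇑(Finsupp.single K (1 : ℚ)) = Hd K := by
  classical
  funext J
  simp [Hd, Finsupp.single_apply, eq_comm]

theorem Hw_eq_Hd (u : List A) : Hw u = Hd (flattenWS [u]) := by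
  unfold Hw flattenWS
  split_ifs with h <;> simp [h]

theorem finsum_mem_Hd_smul {M : Type*} [AddCommMonoid M] [Module ℚ M] (s : Set (Sentence A))
    [DecidablePred (· ∈ s)] (X : Sentence A) (F : Sentence A → M) :
    ∑ᶠ I ∈ s, Hd X I • F I = if X ∈ s then F X else 0 := by
  rw [finsum_mem_def, finsum_eq_single _ X fun I hI => by simp [Hd, Set.indicator_apply, hI]]
  simp [Hd, Set.indicator_apply]

theorem finite_support_Hd_smul {M : Type*} [AddCommMonoid M] [Module ℚ M] (s : Set (Sentence A))
    (X : Sentence A) (F : Sentence A → M) :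
    (s ∩ Function.support fun I => Hd X I • F I).Finite := by
  refine (Set.finite_singleton X).subset fun I hI => ?_
  by_contra hne
  exact hI.2 (by simp [Hd, Set.mem_singleton_iff.not.1 hne])

theorem restrictMono_fst {p : Sentence A} {js : List ℕ} (h : p.length ≤ js.length) :
    (restrictMono p js).1 = flattenWS p := by
  conv_rhs => rw [flattenWS, ← List.map_fst_zip h, List.filter_map]
  rfl

theorem validMono_restrictMono (p : Sentence A) :
    ValidMono (restrictMono p (List.range' 1 p.length)) := by
  have hsnd : (restrictMono p (List.range' 1 p.length)).2.Sublist (List.range' 1 p.length) := by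
    have hzip : (p.zip (List.range' 1 p.length)).map Prod.snd = List.range' 1 p.length :=
      List.map_snd_zip (by simp)
    have hsub := (List.filter_sublist (p := fun x => !x.1.isEmpty)
      (l := p.zip (List.range' 1 p.length))).map Prod.snd
    rwa [hzip] at hsub
  refine ⟨by simp [restrictMono], ?_, fun j hj => ?_, ?_⟩
  · exact (List.Pairwise.sublist hsnd List.pairwise_lt_range').isChain
  · exact (List.mem_range'_1.1 (hsnd.subset hj)).1
  · rw [restrictMono_fst (by simp)]
    exact isSentence_flattenWS p

theorem MQ_restrictMono (I p : Sentence A) :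
    MQ I (restrictMono p (List.range' 1 p.length)) = Hd (flattenWS p) I := by
  classical
  rw [MQ, Hd, restrictMono_fst (by simp)]
  exact if_congr ((and_iff_left (validMono_restrictMono p)).trans eq_comm) rfl rfl

theorem length_of_mem_splitsOf {K : Sentence A} {p : Sentence A × Sentence A}
    (hp : p ∈ splitsOf K) : p.1.length = K.length ∧ p.2.length = K.length := by
  induction K generalizing p with
  | nil => simp_all [splitsOf]
  | cons w K ih =>
    simp only [splitsOf, List.mem_flatten, List.mem_map] at hp
    obtain ⟨-, ⟨q, hq, rfl⟩, hp⟩ := hp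
    obtain ⟨t, -, rfl⟩ := List.mem_map.1 hp
    simpa using ih hq

theorem mulQ_MQ_apply (I S K : Sentence A) :
    mulQ (MQ I) (MQ S) (K, List.range' 1 K.length) =
      splitSum K fun p => Hd (flattenWS p.1) I * Hd (flattenWS p.2) S := by
  refine splitSum_congr (F := fun p => MQ I (restrictMono p.1 (List.range' 1 K.length)) *
    MQ S (restrictMono p.2 (List.range' 1 K.length))) fun p hp => ?_
  obtain ⟨h₁, h₂⟩ := length_of_mem_splitsOf hp
  rw [← MQ_restrictMono I p.1, ← MQ_restrictMono S p.2, h₁, h₂]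

/-- The space `NSym_A` proper: finitely supported elements whose support consists of
sentences. -/
noncomputable def sentenceSupported (A : Type*) : Submodule ℚ (FinNSym A) :=
  Finsupp.supported ℚ ℚ {I : Sentence A | IsSentence I}

theorem pairNQ_mulQ_MQ {f : FinNSym A} (hf : f ∈ sentenceSupported A) (I S : Sentence A) :
    pairNQ f (mulQ (MQ I) (MQ S)) =
      coproductSum (fun p => Hd (flattenWS p.1) I * Hd (flattenWS p.2) S) f := by
  rw [pairNQ, coproductSum_apply, Finsupp.sum]
  simp only [mulQ_MQ_apply, smul_eq_mul]
  refine finsum_mem_eq_sum_of_inter_support_eq _ ?_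
  ext K
  simp only [Set.mem_inter_iff, Function.mem_support, Finset.mem_coe]
  refine and_congr_left fun hK => ⟨fun _ => ?_, fun h => hf h⟩
  exact Finsupp.mem_support_iff.2 (left_ne_zero_of_mul hK)

theorem rperp_MQ {f : FinNSym A} (hf : f ∈ sentenceSupported A) (S : Sentence A) :
    rperp (MQ S) f =
      coproductSum (fun p => Hd (flattenWS p.2) S • (Hd (flattenWS p.1) : NSymA A)) f := by
  classical
  have hterm (I : Sentence A) : pairNQ f (mulQ (MQ I) (MQ S)) • (Hd I : NSymA A) =
      coproductSum (fun p => Hd (flattenWS p.1) I • Hd (flattenWS p.2) S • (Hd I : NSymA A)) f := by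
    rw [pairNQ_mulQ_MQ hf]
    simp only [← mul_smul]
    exact map_coproductSum (LinearMap.toSpanSingleton ℚ (NSymA A) (Hd I)) _ f
  simp only [rperp, hterm]
  rw [finsum_mem_coproductSum _ _ _ fun p => finite_support_Hd_smul _ _ _]
  simp only [finsum_mem_Hd_smul]
  simp only [Set.mem_ofPred_eq, isSentence_flattenWS, if_true]

open Classical in
theorem finsum_mem_refines_rperp {f : FinNSym A} (hf : f ∈ sentenceSupported A) (Q : Sentence A) :
    ∑ᶠ S ∈ {S : Sentence A | Refines Q S}, rperp (MQ S) f =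
      coproductSum (fun p => if Refines Q (flattenWS p.2) then (Hd (flattenWS p.1) : NSymA A)
        else 0) f := by
  simp only [rperp_MQ hf]
  rw [finsum_mem_coproductSum _ _ _ fun p => finite_support_Hd_smul _ _ _]
  simp only [finsum_mem_Hd_smul]
  rfl

theorem mulN_Hd_Hd (I J : Sentence A) : mulN (Hd I) (Hd J) = Hd (I ++ J) := by
  funext X
  simp only [mulN, Hd]
  split_ifs with hX
  · subst hX
    rw [Finset.sum_eq_single I.length (fun j hj hne => ?_) (by simp)]
    · simp
    · rw [if_neg, zero_mul]
      intro h
      have hlen := congrArg List.length h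
      simp only [List.length_take, List.length_append, Finset.mem_range] at hlen hj
      omega
  · refine Finset.sum_eq_zero fun j _ => ?_
    rw [mul_ite, mul_one, mul_zero, ← ite_and, if_neg]
    rintro ⟨rfl, rfl⟩
    exact hX (List.take_append_drop j X).symm

/-- Left multiplication by `f` as a linear map. -/
noncomputable def mulNLeft (f : NSymA A) : NSymA A →ₗ[ℚ] NSymA A where
  toFun := mulN f
  map_add' g h := by
    funext I
    simp [mulN, mul_add, Finset.sum_add_distrib]
  map_smul' c g := by
    funext I
    simp [mulN, Finset.mul_sum, mul_left_comm]

open Classical in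
theorem finsum_mem_isSentence_ite_refines {M : Type*} [AddCommMonoid M] (S : Sentence A)
    (F : Sentence A → M) :
    ∑ᶠ Q ∈ {Q : Sentence A | IsSentence Q}, (if Refines Q S then F Q else 0) =
      ∑ Q ∈ refinements S, F Q := by
  rw [← finsum_mem_coe_finset, finsum_mem_def, finsum_mem_def]
  refine finsum_congr fun Q => ?_
  simp only [Set.indicator_apply, Finset.mem_coe, mem_refinements, Set.mem_ofPred_eq, ite_and]

theorem Bern_coe {f : FinNSym A} (hf : f ∈ sentenceSupported A) (v : List A) :
    Bern v f = bernstein v f := by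
  classical
  have hterm (Q : Sentence A) : (-1 : ℚ) ^ Q.length • mulN (Hw (v ++ Q.reverse.flatten))
        (∑ᶠ S ∈ {S : Sentence A | Refines Q S}, rperp (MQ S) f) =
      coproductSum (fun p => if Refines Q (flattenWS p.2) then (-1 : ℚ) ^ Q.length •
        (Hd (flattenWS [v ++ Q.reverse.flatten] ++ flattenWS p.1) : NSymA A) else 0) f := by
    rw [finsum_mem_refines_rperp hf, Hw_eq_Hd]
    refine (map_coproductSum ((-1 : ℚ) ^ Q.length • mulNLeft (Hd _)) _ f).trans ?_
    congr 2 with p : 1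
    rw [apply_ite (DFunLike.coe _), map_zero, LinearMap.smul_apply, ← mulN_Hd_Hd]
    rfl
  have hcoe : ⇑(bernstein v f) = Finsupp.lcoeFun (R := ℚ) (bernstein v f) := rfl
  simp only [Bern, hterm]
  rw [finsum_mem_coproductSum, hcoe, bernstein, map_coproductSum]
  · congr 2 with p : 1
    rw [finsum_mem_isSentence_ite_refines, map_sum]
    refine Finset.sum_congr rfl fun Q _ => ?_
    rw [map_smul, ← coe_single_one]
    rfl
  · intro p
    refine (refinements (flattenWS p.2)).finite_toSet.subset fun Q hQ => ?_
    refine mem_refinements.2 ⟨hQ.1, by_contra fun h => hQ.2 (if_neg h)⟩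

theorem bernstein_mem_sentenceSupported (v : List A) (f : FinNSym A) :
    bernstein v f ∈ sentenceSupported A := by
  refine coproductSum_mem (fun p => sum_mem fun Q _ => Submodule.smul_mem _ _ ?_) f
  refine Finsupp.single_mem_supported ℚ _ ?_
  exact isSentence_append.2 ⟨isSentence_flattenWS _, isSentence_flattenWS _⟩

theorem immaculate_mem_sentenceSupported (J : Sentence A) :
    immaculate J ∈ sentenceSupported A := by
  cases J with
  | nil => exact Finsupp.single_mem_supported ℚ _ isSentence_nil
  | cons v J => exact bernstein_mem_sentenceSupported v _

theorem ImmS_eq_coe_immaculate (J : Sentence A) : ImmS J = immaculate J := by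
  induction J with
  | nil => exact (coe_single_one _).symm
  | cons v J ih =>
    rw [immaculate_cons, ← Bern_coe (immaculate_mem_sentenceSupported J), ← ih]
    rfl

end BernsteinComparison

section Ribbons

variable {A : Type*}

theorem refines_append_singleton {C S : Sentence A} {x : List A} :
    Refines (C ++ [x]) S ↔
      ∃ Q₁ Q₂ T, C = Q₁ ++ Q₂ ∧ Refines Q₁ T ∧ S = T ++ [Q₂.flatten ++ x] := by
  constructor
  · intro h
    rcases List.eq_nil_or_concat' S with rfl | ⟨T, s, rfl⟩
    · simp [refines_nil_right] at h
    obtain ⟨Q₁, Q₂, hQ, hT, hs⟩ := refines_append_right.1 h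
    obtain ⟨hne, rfl⟩ := refines_singleton_right.1 hs
    obtain ⟨Q₂, y, rfl⟩ := (List.eq_nil_or_concat' Q₂).resolve_left hne
    rw [← List.append_assoc] at hQ
    obtain ⟨rfl, hy⟩ := List.append_inj' hQ rfl
    obtain rfl : x = y := List.singleton_inj.1 hy
    exact ⟨Q₁, Q₂, T, rfl, hT, by simp⟩
  · rintro ⟨Q₁, Q₂, T, rfl, hT, rfl⟩
    refine refines_append_right.2 ⟨Q₁, Q₂ ++ [x], List.append_assoc .., hT, ?_⟩
    exact refines_singleton_right.2 ⟨by simp, by simp⟩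

/-- Lengthen the last word of `D` by the word `w`. -/
def appendToLast (D : Sentence A) (w : List A) : Sentence A :=
  D.dropLast ++ [D.getLastD [] ++ w]

theorem appendToLast_append_singleton (D : Sentence A) (x w : List A) :
    appendToLast (D ++ [x]) w = D ++ [x ++ w] := by
  simp [appendToLast]

theorem refines_append_singleton_append {C S : Sentence A} {u w : List A} :
    Refines (C ++ [u ++ w]) S ↔ ∃ D, Refines (C ++ [u]) D ∧ appendToLast D w = S := by
  simp only [refines_append_singleton]
  constructor
  · rintro ⟨Q₁, Q₂, T, hC, hT, rfl⟩
    refine ⟨_, ⟨Q₁, Q₂, T, hC, hT, rfl⟩, ?_⟩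
    rw [appendToLast_append_singleton, List.append_assoc]
  · rintro ⟨-, ⟨Q₁, Q₂, T, hC, hT, rfl⟩, rfl⟩
    refine ⟨Q₁, Q₂, T, hC, hT, ?_⟩
    rw [appendToLast_append_singleton, List.append_assoc]

theorem refines_append_singleton_append_singleton {C S : Sentence A} {u w : List A} :
    Refines (C ++ [u] ++ [w]) S ↔
      (∃ D, Refines (C ++ [u]) D ∧ D ++ [w] = S) ∨
        ∃ D, Refines (C ++ [u]) D ∧ appendToLast D w = S := by
  rw [← refines_append_singleton_append, refines_append_singleton (x := w),
    refines_append_singleton (x := u ++ w)]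
  constructor
  · rintro ⟨Q₁, Q₂, T, hC, hT, rfl⟩
    rcases List.eq_nil_or_concat' Q₂ with rfl | ⟨Q₂, y, rfl⟩
    · exact Or.inl ⟨T, by simpa [hC] using hT, rfl⟩
    · rw [← List.append_assoc] at hC
      obtain ⟨rfl, hy⟩ := List.append_inj' hC rfl
      obtain rfl : u = y := List.singleton_inj.1 hy
      exact Or.inr ⟨Q₁, Q₂, T, rfl, hT, by simp⟩
  · rintro (⟨D, hD, rfl⟩ | ⟨Q₁, Q₂, T, rfl, hT, rfl⟩)
    · exact ⟨C ++ [u], [], D, by simp, hD, rfl⟩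
    · exact ⟨Q₁, Q₂ ++ [u], T, by simp, hT, by simp⟩

theorem Refines.exists_eq_append_singleton {C D : Sentence A} {u : List A}
    (h : Refines (C ++ [u]) D) : ∃ T s, D = T ++ [s] := by
  obtain ⟨-, Q, T, -, -, rfl⟩ := refines_append_singleton.1 h
  exact ⟨T, Q.flatten ++ u, rfl⟩

theorem Refines.length_appendToLast {C D : Sentence A} {u : List A} (h : Refines (C ++ [u]) D)
    (w : List A) : (appendToLast D w).length = D.length := by
  obtain ⟨T, s, rfl⟩ := h.exists_eq_append_singleton
  rw [appendToLast_append_singleton, List.length_append, List.length_append,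
    List.length_singleton, List.length_singleton]

theorem Refines.appendToLast_inj {C D D' : Sentence A} {u w : List A}
    (h : Refines (C ++ [u]) D) (h' : Refines (C ++ [u]) D')
    (heq : appendToLast D w = appendToLast D' w) : D = D' := by
  obtain ⟨T, s, rfl⟩ := h.exists_eq_append_singleton
  obtain ⟨T', s', rfl⟩ := h'.exists_eq_append_singleton
  rw [appendToLast_append_singleton, appendToLast_append_singleton] at heq
  obtain ⟨rfl, hs⟩ := List.append_inj' heq rfl
  rw [List.append_cancel_right (List.singleton_inj.1 hs)]

theorem Refines.append_singleton_ne_appendToLast {C D D' : Sentence A} {u w : List A}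
    (hC : IsSentence (C ++ [u])) (h : Refines (C ++ [u]) D) :
    D' ++ [w] ≠ appendToLast D w := by
  intro heq
  obtain ⟨T, s, rfl⟩ := h.exists_eq_append_singleton
  rw [appendToLast_append_singleton] at heq
  have hs : s ≠ [] := h.isSentence hC s (by simp)
  exact hs (List.self_eq_append_left.1 (List.singleton_inj.1 (List.append_inj' heq rfl).2))

theorem sum_coarsenings_append_singleton_append {M : Type*} [AddCommMonoid M] {C : Sentence A}
    {u : List A} (hC : IsSentence (C ++ [u])) (w : List A) (F : Sentence A → M) :
    ∑ S ∈ coarsenings (C ++ [u ++ w]), F S =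
      ∑ D ∈ coarsenings (C ++ [u]), F (appendToLast D w) := by
  classical
  have hCw : IsSentence (C ++ [u ++ w]) := by
    rw [isSentence_append, isSentence_singleton] at hC ⊢
    exact ⟨hC.1, List.append_ne_nil_of_left_ne_nil hC.2 w⟩
  have himage : coarsenings (C ++ [u ++ w]) =
      (coarsenings (C ++ [u])).image (appendToLast · w) := by
    ext S
    simp only [Finset.mem_image, mem_coarsenings hC, mem_coarsenings hCw,
      refines_append_singleton_append]
  rw [himage, Finset.sum_image]
  intro D hD D' hD' heq
  exact ((mem_coarsenings hC).1 hD).appendToLast_inj ((mem_coarsenings hC).1 hD') heq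

theorem sum_coarsenings_append_singleton_append_singleton {M : Type*} [AddCommMonoid M]
    {C : Sentence A} {u w : List A} (hC : IsSentence (C ++ [u])) (hw : w ≠ [])
    (F : Sentence A → M) :
    ∑ S ∈ coarsenings (C ++ [u] ++ [w]), F S =
      ∑ D ∈ coarsenings (C ++ [u]), F (D ++ [w]) +
        ∑ D ∈ coarsenings (C ++ [u]), F (appendToLast D w) := by
  classical
  have hCw : IsSentence (C ++ [u] ++ [w]) := isSentence_append.2 ⟨hC, isSentence_singleton.2 hw⟩
  have hunion : coarsenings (C ++ [u] ++ [w]) = (coarsenings (C ++ [u])).image (· ++ [w]) ∪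
      (coarsenings (C ++ [u])).image (appendToLast · w) := by
    ext S
    simp only [Finset.mem_union, Finset.mem_image, mem_coarsenings hC, mem_coarsenings hCw,
      refines_append_singleton_append_singleton]
  rw [hunion, Finset.sum_union, Finset.sum_image, Finset.sum_image]
  · intro D hD D' hD' heq
    exact ((mem_coarsenings hC).1 hD).appendToLast_inj ((mem_coarsenings hC).1 hD') heq
  · exact fun D _ D' _ heq => List.append_cancel_right heq
  · rw [Finset.disjoint_left]
    intro S hS hS'
    obtain ⟨D', -, rfl⟩ := Finset.mem_image.1 hS
    obtain ⟨D, hD, heq⟩ := Finset.mem_image.1 hS'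
    exact ((mem_coarsenings hC).1 hD).append_singleton_ne_appendToLast hC heq.symm

/-- The colored ribbon function `R_C` as a finitely supported element. -/
noncomputable def ribbon (C : Sentence A) : FinNSym A :=
  ∑ S ∈ coarsenings C, (-1 : ℚ) ^ (C.length - S.length) • Finsupp.single S 1

theorem Rib_eq_coe_ribbon {C : Sentence A} (hC : IsSentence C) : Rib C = ribbon C := by
  have hset : {S : Sentence A | Refines C S} = coarsenings C := by
    ext S
    rw [Finset.mem_coe, mem_coarsenings hC, Set.mem_ofPred_eq]
  have hcoe : ⇑(ribbon C) = Finsupp.lcoeFun (R := ℚ) (ribbon C) := rfl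
  rw [Rib, hset, finsum_mem_coe_finset, hcoe, ribbon, map_sum]
  refine Finset.sum_congr rfl fun S _ => ?_
  rw [map_smul, ← coe_single_one]
  rfl

theorem mulHRight_ribbon {C : Sentence A} {u w : List A} (hC : IsSentence (C ++ [u]))
    (hw : w ≠ []) :
    mulHRight w (ribbon (C ++ [u])) = ribbon (C ++ [u] ++ [w]) + ribbon (C ++ [u ++ w]) := by
  rw [ribbon, ribbon, ribbon, sum_coarsenings_append_singleton_append hC,
    sum_coarsenings_append_singleton_append_singleton hC hw, map_sum, add_assoc,
    ← Finset.sum_add_distrib, ← Finset.sum_add_distrib]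
  refine Finset.sum_congr rfl fun D hD => ?_
  have hCD : Refines (C ++ [u]) D := (mem_coarsenings hC).1 hD
  have hlen := hCD.length_le
  rw [hCD.length_appendToLast, map_smul, mulHRight_single, flattenWS_singleton hw]
  simp only [List.length_append, List.length_singleton] at hlen ⊢
  rw [Nat.add_sub_add_right, Nat.sub_add_comm hlen, pow_succ, mul_neg_one, neg_smul,
    neg_add_cancel, add_zero]

theorem ribbon_nil : ribbon ([] : Sentence A) = Finsupp.single [] 1 := by
  have hcoarse : coarsenings ([] : Sentence A) = {[]} := by
    ext S
    rw [mem_coarsenings isSentence_nil, Finset.mem_singleton]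
    refine ⟨fun h => List.eq_nil_of_length_eq_zero (Nat.le_zero.1 h.length_le), ?_⟩
    rintro rfl
    exact refines_nil_right.2 rfl
  simp [ribbon, hcoarse]

theorem ribbon_singleton {w : List A} (hw : w ≠ []) : ribbon [w] = Finsupp.single [w] 1 := by
  have hcoarse : coarsenings [w] = {[w]} := by
    ext S
    rw [mem_coarsenings (isSentence_singleton.2 hw), Finset.mem_singleton, ← List.nil_append [w],
      refines_append_singleton]
    constructor
    · rintro ⟨Q₁, Q₂, T, hQ, hT, rfl⟩
      obtain ⟨rfl, rfl⟩ := List.append_eq_nil_iff.1 hQ.symm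
      obtain rfl : T = [] := List.eq_nil_of_length_eq_zero (Nat.le_zero.1 hT.length_le)
      rfl
    · rintro rfl
      exact ⟨[], [], [], rfl, refines_nil_right.2 rfl, rfl⟩
  simp [ribbon, hcoarse]

end Ribbons

section Diagrams

variable {A B : Type*}

/-- The diagram obtained by carrying out a sequence of placements, starting from the empty one. -/
def diagram (l : List (A × ℕ)) : Sentence A :=
  l.foldl appendLetter []

/-- A sequence of placements is admissible if each letter goes at the end of an existing row or
into the row right below the last one. -/
inductive IsAdmissible : List (A × ℕ) → Prop
  | nil : IsAdmissible []
  | append_singleton {l : List (A × ℕ)} {x : A × ℕ} (hl : IsAdmissible l)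
      (hx : x.2 ≤ (diagram l).length) : IsAdmissible (l ++ [x])

theorem diagram_nil : diagram ([] : List (A × ℕ)) = [] :=
  rfl

theorem diagram_append (l t : List (A × ℕ)) :
    diagram (l ++ t) = t.foldl appendLetter (diagram l) :=
  List.foldl_append

theorem diagram_append_singleton (l : List (A × ℕ)) (x : A × ℕ) :
    diagram (l ++ [x]) = appendLetter (diagram l) x :=
  diagram_append l [x]

theorem length_le_length_appendLetter (J : Sentence A) (x : A × ℕ) :
    J.length ≤ (appendLetter J x).length := by
  unfold appendLetter
  split_ifs <;> simp

theorem length_diagram_le_append (l t : List (A × ℕ)) :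
    (diagram l).length ≤ (diagram (l ++ t)).length := by
  induction t using List.reverseRecOn with
  | nil => simp
  | append_singleton t x ih =>
    rw [← List.append_assoc, diagram_append_singleton]
    exact ih.trans (length_le_length_appendLetter _ x)

theorem isAdmissible_append_singleton {l : List (A × ℕ)} {x : A × ℕ} :
    IsAdmissible (l ++ [x]) ↔ IsAdmissible l ∧ x.2 ≤ (diagram l).length := by
  refine ⟨fun h => ?_, fun h => h.1.append_singleton h.2⟩
  generalize hm : l ++ [x] = m at h
  cases h with
  | nil => simp at hm
  | append_singleton hl hx =>
    obtain ⟨rfl, hxy⟩ := List.append_inj' hm rfl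
    obtain rfl := List.singleton_inj.1 hxy
    exact ⟨hl, hx⟩

theorem IsAdmissible.of_append {l t : List (A × ℕ)} (h : IsAdmissible (l ++ t)) :
    IsAdmissible l := by
  induction t using List.reverseRecOn with
  | nil => simpa using h
  | append_singleton t x ih =>
    rw [← List.append_assoc, isAdmissible_append_singleton] at h
    exact ih h.1

theorem isAdmissible_append {l t : List (A × ℕ)} (ht : RowAntitone t) :
    IsAdmissible (l ++ t) ↔ IsAdmissible l ∧ ∀ x ∈ t, x.2 ≤ (diagram l).length := by
  constructor
  · intro h
    refine ⟨h.of_append, ?_⟩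
    cases t with
    | nil => simp
    | cons x t =>
      rw [List.append_cons] at h
      have hx := (isAdmissible_append_singleton.1 h.of_append).2
      exact List.forall_mem_cons.2 ⟨hx, fun y hy => ((List.pairwise_cons.1 ht).1 y hy).trans hx⟩
  · rintro ⟨hl, hrows⟩
    clear ht
    induction t using List.reverseRecOn with
    | nil => simpa using hl
    | append_singleton t x ih =>
      rw [← List.append_assoc]
      exact (ih fun y hy => hrows y (List.mem_append_left _ hy)).append_singleton
        ((hrows x (by simp)).trans (length_diagram_le_append l t))

theorem getD_appendLetter {J : Sentence A} {x : A × ℕ} (hx : x.2 ≤ J.length) (r : ℕ) :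
    (appendLetter J x).getD r [] = J.getD r [] ++ if x.2 = r then [x.1] else [] := by
  unfold appendLetter
  split_ifs with hlt hr hr
  · subst hr
    simp [List.getD_eq_getElem?_getD, hlt]
  · simp [List.getD_eq_getElem?_getD, hr]
  · obtain rfl : r = J.length := by omega
    simp [List.getD_eq_getElem?_getD]
  · rcases lt_or_ge r J.length with h | h
    · simp [List.getD_eq_getElem?_getD, List.getElem?_append_left h]
    · have : r ≠ J.length := by omega
      simp [List.getD_eq_getElem?_getD, h,
        Nat.lt_of_le_of_ne h this.symm]

theorem IsAdmissible.getD_diagram {l : List (A × ℕ)} (hl : IsAdmissible l) (r : ℕ) :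
    (diagram l).getD r [] = (l.filter (·.2 = r)).map Prod.fst := by
  induction hl with
  | nil => rfl
  | append_singleton _ hx ih =>
    rw [diagram_append_singleton, getD_appendLetter hx, ih, List.filter_append, List.map_append]
    split_ifs with h <;> simp [h]

theorem isSentence_appendLetter {J : Sentence A} (hJ : IsSentence J) (x : A × ℕ) :
    IsSentence (appendLetter J x) := by
  unfold appendLetter
  split_ifs with h
  · intro w hw
    obtain ⟨i, hi, rfl⟩ := List.getElem_of_mem hw
    rw [List.getElem_modify]
    split_ifs
    · simp
    · exact hJ _ (List.getElem_mem _)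
  · exact isSentence_append.2 ⟨hJ, isSentence_singleton.2 (by simp)⟩

theorem isSentence_diagram (l : List (A × ℕ)) : IsSentence (diagram l) := by
  induction l using List.reverseRecOn with
  | nil => exact isSentence_nil
  | append_singleton l x ih =>
    rw [diagram_append_singleton]
    exact isSentence_appendLetter ih x

theorem IsSentence.lt_length_iff {J : Sentence A} (hJ : IsSentence J) {r : ℕ} :
    r < J.length ↔ J.getD r [] ≠ [] := by
  rcases lt_or_ge r J.length with h | h
  · simpa [List.getD_eq_getElem?_getD, h] using hJ _ (List.getElem_mem h)
  · simp [List.getD_eq_getElem?_getD, h]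

theorem IsSentence.ext_getD {J K : Sentence A} (hJ : IsSentence J) (hK : IsSentence K)
    (h : ∀ r, J.getD r [] = K.getD r []) : J = K := by
  have hlength : J.length = K.length :=
    eq_of_forall_lt_iff fun r => by rw [hJ.lt_length_iff, hK.lt_length_iff, h]
  refine List.ext_getElem hlength fun r hrJ hrK => ?_
  simpa [List.getD_eq_getElem?_getD, hrJ, hrK] using h r

theorem IsAdmissible.lt_length_diagram_iff {l : List (A × ℕ)} (hl : IsAdmissible l) {r : ℕ} :
    r < (diagram l).length ↔ ∃ x ∈ l, x.2 = r := by
  rw [(isSentence_diagram l).lt_length_iff, hl.getD_diagram]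
  simp

theorem diagram_map (g : A → B) (l : List (A × ℕ)) :
    diagram (l.map (Prod.map g id)) = (diagram l).map (List.map g) := by
  induction l using List.reverseRecOn with
  | nil => rfl
  | append_singleton l x ih =>
    rw [List.map_append, List.map_singleton, diagram_append_singleton, diagram_append_singleton, ih]
    unfold appendLetter
    simp only [Prod.map_snd, Prod.map_fst, id_eq, List.length_map]
    split_ifs
    · refine List.ext_getElem (by simp) fun i _ _ => ?_
      simp only [List.getElem_modify, List.getElem_map]
      split_ifs <;> simp
    · simp

theorem isAdmissible_map (g : A → B) {l : List (A × ℕ)} :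
    IsAdmissible (l.map (Prod.map g id)) ↔ IsAdmissible l := by
  induction l using List.reverseRecOn with
  | nil => exact iff_of_true .nil .nil
  | append_singleton l x ih =>
    rw [List.map_append, List.map_singleton, isAdmissible_append_singleton, ih, diagram_map,
      isAdmissible_append_singleton, List.length_map, Prod.map_snd, id]

end Diagrams

section DescentCut

variable {A : Type*}

/-- Cut a sequence of placements after each descent, that is wherever the next letter is placed in
a strictly lower row, and record the resulting words. -/
def descentCut (l : List (A × ℕ)) : Sentence A :=
  (l.splitBy fun x y => y.2 ≤ x.2).map (List.map Prod.fst)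

theorem flatten_descentCut (l : List (A × ℕ)) : (descentCut l).flatten = l.map Prod.fst := by
  rw [descentCut, ← List.map_flatten, List.flatten_splitBy]

theorem isSentence_descentCut (l : List (A × ℕ)) : IsSentence (descentCut l) := by
  simp only [IsSentence, descentCut, List.forall_mem_map, ne_eq, List.map_eq_nil_iff]
  exact fun _ => List.ne_nil_of_mem_splitBy

theorem rowAntitone_iff_isChain {t : List (A × ℕ)} :
    RowAntitone t ↔ t.IsChain fun x y => decide (y.2 ≤ x.2) := by
  have : IsTrans (A × ℕ) fun x y => y.2 ≤ x.2 := ⟨fun _ _ _ h h' => h'.trans h⟩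
  simp only [RowAntitone, decide_eq_true_eq, List.isChain_iff_pairwise]

theorem descentCut_eq_nil {l : List (A × ℕ)} : descentCut l = [] ↔ l = [] := by
  rw [descentCut, List.map_eq_nil_iff, List.splitBy_eq_nil]

/-- There is a descent at the junction of `l` and `b` (no condition if one of them is empty). -/
def DescendsTo (l b : List (A × ℕ)) : Prop :=
  ∀ x ∈ l.getLast?, ∀ y ∈ b.head?, x.2 < y.2

theorem rowAntitone_append_of_not_descendsTo {l b : List (A × ℕ)} (hl : RowAntitone l)
    (hb : RowAntitone b) (h : ¬DescendsTo l b) : RowAntitone (l ++ b) := by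
  rw [rowAntitone_iff_isChain] at *
  refine List.isChain_append.2 ⟨hl, hb, fun x hx y hy => ?_⟩
  by_contra hxy
  refine h fun x' hx' y' hy' => ?_
  rw [Option.mem_unique hx' hx, Option.mem_unique hy' hy]
  simpa using hxy

theorem descentCut_eq_append_singleton {l : List (A × ℕ)} {C : Sentence A} {w : List A} :
    descentCut l = C ++ [w] ↔ ∃ l' b, l = l' ++ b ∧ descentCut l' = C ∧ RowAntitone b ∧
      b.map Prod.fst = w ∧ b ≠ [] ∧ DescendsTo l' b := by
  constructor
  · intro h
    obtain ⟨P, Q, hsplit, rfl, hQ⟩ := List.map_eq_append_iff.1 h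
    obtain ⟨b, rfl, rfl⟩ := List.map_eq_singleton_iff.1 hQ
    obtain ⟨hflat, hnil, hchain, hdesc⟩ := List.splitBy_eq_iff.1 hsplit
    rw [List.isChain_append] at hdesc
    have hP : P.flatten.splitBy (fun x y => y.2 ≤ x.2) = P :=
      List.splitBy_flatten (fun h => hnil (by simp [h])) (fun m hm => hchain m (by simp [hm]))
        hdesc.1
    refine ⟨P.flatten, b, by simpa using hflat, by rw [descentCut, hP],
      rowAntitone_iff_isChain.2 (hchain b (by simp)), rfl, fun hb => hnil (by simp [hb]), ?_⟩
    rcases P.eq_nil_or_concat' with rfl | ⟨P', b', rfl⟩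
    · simp [DescendsTo]
    · obtain ⟨hb', hb, hlt⟩ := hdesc.2.2 b' (by simp) b (by simp)
      simpa [DescendsTo, List.getLast?_append, List.getLast?_eq_some_getLast hb',
        List.head?_eq_some_head hb] using hlt
  · rintro ⟨l', b, rfl, rfl, hb, rfl, hne, hdesc⟩
    rw [descentCut, List.splitBy_append (by simpa [DescendsTo] using hdesc), List.map_append,
      List.splitBy_of_isChain hne (rowAntitone_iff_isChain.1 hb)]
    rfl

theorem descentCut_eq_singleton {l : List (A × ℕ)} {w : List A} (hw : w ≠ []) :
    descentCut l = [w] ↔ RowAntitone l ∧ l.map Prod.fst = w := by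
  rw [← List.nil_append [w], descentCut_eq_append_singleton]
  constructor
  · rintro ⟨l', b, rfl, hl', hb, hbw, -, -⟩
    obtain rfl := descentCut_eq_nil.1 hl'
    exact ⟨hb, hbw⟩
  · rintro ⟨hl, rfl⟩
    exact ⟨[], l, rfl, rfl, hl, rfl, by simpa using hw, by simp [DescendsTo]⟩

theorem descentCut_append_last_iff {m : List (A × ℕ)} {C : Sentence A} {u w : List A}
    (hu : u ≠ []) (hw : w ≠ []) :
    (descentCut m = C ++ [u] ++ [w] ∨ descentCut m = C ++ [u ++ w]) ↔
      ∃ l t, m = l ++ t ∧ descentCut l = C ++ [u] ∧ RowAntitone t ∧ t.map Prod.fst = w := by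
  constructor
  · rintro (h | h)
    · obtain ⟨l, t, rfl, hl, ht, htw, -, -⟩ := descentCut_eq_append_singleton.1 h
      exact ⟨l, t, rfl, hl, ht, htw⟩
    · obtain ⟨l, b, rfl, hl, hb, hbuw, -, hdesc⟩ := descentCut_eq_append_singleton.1 h
      obtain ⟨b, t, rfl, rfl, rfl⟩ := List.map_eq_append_iff.1 hbuw
      have hne : b ≠ [] := by simpa using hu
      refine ⟨l ++ b, t, by simp, ?_, (List.pairwise_append.1 hb).2.1, rfl⟩
      refine descentCut_eq_append_singleton.2
        ⟨l, b, rfl, hl, (List.pairwise_append.1 hb).1, rfl, hne, ?_⟩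
      simpa [DescendsTo, List.head?_append, List.head?_eq_some_head hne] using hdesc
  · rintro ⟨l, t, rfl, hl, ht, rfl⟩
    have htne : t ≠ [] := by simpa using hw
    by_cases hdesc : DescendsTo l t
    · exact .inl (descentCut_eq_append_singleton.2 ⟨l, t, rfl, hl, ht, rfl, htne, hdesc⟩)
    obtain ⟨l', b, rfl, hl', hb, rfl, hne, hdesc'⟩ := descentCut_eq_append_singleton.1 hl
    refine .inr (descentCut_eq_append_singleton.2 ⟨l', b ++ t, by simp, hl',
      rowAntitone_append_of_not_descendsTo hb ht fun h => hdesc ?_, by simp, by simp [hne], ?_⟩)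
    · simpa [DescendsTo, List.getLast?_append, List.getLast?_eq_some_getLast hne] using h
    · simpa [DescendsTo, List.head?_append, List.head?_eq_some_head hne] using hdesc'

end DescentCut

section RowReading

variable {A : Type*}

/-- The sequence of placements which builds `C` row after row. -/
def rowReading (C : Sentence A) : List (A × ℕ) :=
  C.zipIdx.flatMap fun p => p.1.map (·, p.2)

/-- The sum over the boxes of `C` of the index of their row. -/
def rowSum (C : Sentence A) : ℕ :=
  ((rowReading C).map Prod.snd).sum

theorem rowReading_append_singleton (C : Sentence A) (w : List A) :
    rowReading (C ++ [w]) = rowReading C ++ w.map (·, C.length) := by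
  simp [rowReading, List.zipIdx_append]

theorem map_fst_rowReading (C : Sentence A) : (rowReading C).map Prod.fst = C.flatten := by
  induction C using List.reverseRecOn with
  | nil => rfl
  | append_singleton C w ih => simp [rowReading_append_singleton, ih, Function.comp_def]

theorem lt_length_of_mem_rowReading {C : Sentence A} {x : A × ℕ} (hx : x ∈ rowReading C) :
    x.2 < C.length := by
  obtain ⟨p, hp, hxp⟩ := List.mem_flatMap.1 hx
  obtain ⟨a, -, rfl⟩ := List.mem_map.1 hxp
  exact (List.mem_zipIdx' hp).1

theorem rowReading_appendLetter_perm {J : Sentence A} {x : A × ℕ} (hx : x.2 ≤ J.length) :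
    (rowReading (appendLetter J x)).Perm (rowReading J ++ [x]) := by
  obtain ⟨a, r⟩ := x
  rcases hx.lt_or_eq with h | rfl
  · obtain ⟨P, w, Q, rfl, rfl⟩ : ∃ P w Q, J = P ++ w :: Q ∧ r = P.length :=
      ⟨J.take r, J[r], J.drop (r + 1), by simp, by simpa using h.le⟩
    have hstep : appendLetter (P ++ w :: Q) (a, P.length) = P ++ (w ++ [a]) :: Q := by
      simp [appendLetter, List.modify_eq_take_cons_drop]
    rw [hstep]
    simp only [rowReading, List.zipIdx_append, List.zipIdx_cons, List.flatMap_append,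
      List.flatMap_cons, List.map_append, List.append_assoc, List.map_cons, List.map_nil, zero_add]
    exact .append_left _ (.append_left _ List.perm_append_comm)
  · simp [appendLetter, rowReading_append_singleton]

theorem IsAdmissible.perm_rowReading_diagram {l : List (A × ℕ)} (hl : IsAdmissible l) :
    l.Perm (rowReading (diagram l)) := by
  induction hl with
  | nil => rfl
  | append_singleton _ hx ih =>
    rw [diagram_append_singleton]
    exact (ih.append_right _).trans (rowReading_appendLetter_perm hx).symm

theorem IsAdmissible.perm_flatten_diagram {l : List (A × ℕ)} (hl : IsAdmissible l) :
    (l.map Prod.fst).Perm (diagram l).flatten := by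
  rw [← map_fst_rowReading]
  exact hl.perm_rowReading_diagram.map _

theorem IsAdmissible.rowSum_diagram {l : List (A × ℕ)} (hl : IsAdmissible l) :
    rowSum (diagram l) = (l.map Prod.snd).sum :=
  (hl.perm_rowReading_diagram.map Prod.snd).sum_eq.symm

theorem rowAntitone_map_const (w : List A) (r : ℕ) : RowAntitone (w.map (·, r)) :=
  List.pairwise_map.2 (List.pairwise_of_forall fun _ _ => le_rfl)

theorem foldl_appendLetter_append_singleton (J : Sentence A) (v w : List A) :
    (w.map (·, J.length)).foldl appendLetter (J ++ [v]) = J ++ [v ++ w] := by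
  induction w generalizing v with
  | nil => simp
  | cons a w ih =>
    have hstep : appendLetter (J ++ [v]) (a, J.length) = J ++ [v ++ [a]] := by
      simp [appendLetter, List.modify_eq_take_cons_drop]
    simp [hstep, ih]

theorem foldl_appendLetter_new_row (J : Sentence A) {w : List A} (hw : w ≠ []) :
    (w.map (·, J.length)).foldl appendLetter J = J ++ [w] := by
  obtain ⟨a, w, rfl⟩ := List.exists_cons_of_ne_nil hw
  have hstep : appendLetter J (a, J.length) = J ++ [[a]] := by simp [appendLetter]
  rw [List.map_cons, List.foldl_cons, hstep, foldl_appendLetter_append_singleton]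
  rfl

theorem IsSentence.diagram_rowReading {C : Sentence A} (hC : IsSentence C) :
    diagram (rowReading C) = C := by
  induction C using List.reverseRecOn with
  | nil => rfl
  | append_singleton C w ih =>
    obtain ⟨hC, hw⟩ := isSentence_append.1 hC
    rw [rowReading_append_singleton, diagram_append, ih hC,
      foldl_appendLetter_new_row C (isSentence_singleton.1 hw)]

theorem IsSentence.isAdmissible_rowReading {C : Sentence A} (hC : IsSentence C) :
    IsAdmissible (rowReading C) := by
  induction C using List.reverseRecOn with
  | nil => exact .nil
  | append_singleton C w ih =>
    have hC := (isSentence_append.1 hC).1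
    rw [rowReading_append_singleton, isAdmissible_append (rowAntitone_map_const w _),
      hC.diagram_rowReading]
    exact ⟨ih hC, by simp⟩

theorem IsSentence.descentCut_rowReading {C : Sentence A} (hC : IsSentence C) :
    descentCut (rowReading C) = C := by
  induction C using List.reverseRecOn with
  | nil => rfl
  | append_singleton C w ih =>
    obtain ⟨hC, hw⟩ := isSentence_append.1 hC
    refine descentCut_eq_append_singleton.2 ⟨rowReading C, w.map (·, C.length),
      rowReading_append_singleton C w, ih hC, rowAntitone_map_const w _,
      by simp [Function.comp_def], by simpa using isSentence_singleton.1 hw, ?_⟩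
    intro x hx y hy
    obtain ⟨a, -, rfl⟩ := List.mem_map.1 (List.mem_of_mem_head? hy)
    exact lt_length_of_mem_rowReading (List.mem_of_mem_getLast? hx)

end RowReading

section Triangularity

variable {A : Type*}

/-- `l` and `m` place the same letters, and `l` places each of them at least as high as `m`. -/
def RowDominated (l m : List (A × ℕ)) : Prop :=
  List.Forall₂ (fun x y => x.1 = y.1 ∧ x.2 ≤ y.2) l m

theorem RowDominated.exists_ge {l m : List (A × ℕ)} (h : RowDominated l m) {x : A × ℕ}
    (hx : x ∈ l) : ∃ y ∈ m, x.2 ≤ y.2 := by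
  induction h with
  | nil => simp at hx
  | cons hxy _ ih =>
    rcases List.mem_cons.1 hx with rfl | hx
    · exact ⟨_, List.mem_cons_self, hxy.2⟩
    · obtain ⟨y, hy, hle⟩ := ih hx
      exact ⟨y, List.mem_cons_of_mem _ hy, hle⟩

theorem RowDominated.eq_or_sum_lt {l m : List (A × ℕ)} (h : RowDominated l m) :
    l = m ∨ (l.map Prod.snd).sum < (m.map Prod.snd).sum := by
  induction h with
  | nil => exact .inl rfl
  | @cons x y l m hxy _ ih =>
    have hx : x = y ∨ x.2 < y.2 := hxy.2.eq_or_lt.imp_left (Prod.ext hxy.1)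
    have hle : x.2 ≤ y.2 := hxy.2
    simp only [List.map_cons, List.sum_cons]
    rcases hx with rfl | hlt <;> rcases ih with rfl | ihlt
    · exact .inl rfl
    all_goals exact .inr (by omega)

theorem finite_setOf_rowDominated (m : List (A × ℕ)) : {l | RowDominated l m}.Finite := by
  refine (List.finite_toSet
    (m.map fun y => (List.range (y.2 + 1)).map (y.1, ·)).sections).subset fun l hl => ?_
  rw [Set.mem_ofPred_eq, List.mem_sections, List.forall₂_map_right_iff]
  refine List.Forall₂.imp (fun x y hxy => ?_) hl
  exact List.mem_map.2 ⟨x.2, by simpa [Nat.lt_succ_iff] using hxy.2, Prod.ext hxy.1.symm rfl⟩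

theorem IsAdmissible.length_diagram_le {l m : List (A × ℕ)} {h : ℕ} (hl : IsAdmissible l)
    (hlm : RowDominated l m) (hm : ∀ y ∈ m, y.2 < h) : (diagram l).length ≤ h := by
  refine le_of_forall_lt fun r hr => ?_
  obtain ⟨x, hx, rfl⟩ := hl.lt_length_diagram_iff.1 hr
  obtain ⟨y, hy, hxy⟩ := hlm.exists_ge hx
  exact hxy.trans_lt (hm y hy)

/-- At most one new row is opened between two descents, so the letters of the `k`-th word of the
descent cut are placed in the first `k` rows. -/
theorem IsAdmissible.rowDominated_rowReading {l : List (A × ℕ)} (hl : IsAdmissible l) :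
    RowDominated l (rowReading (descentCut l)) := by
  generalize hC : descentCut l = C
  induction C using List.reverseRecOn generalizing l with
  | nil =>
    obtain rfl := descentCut_eq_nil.1 hC
    exact .nil
  | append_singleton C w ih =>
    obtain ⟨l, b, rfl, hlC, hb, rfl, -, -⟩ := descentCut_eq_append_singleton.1 hC
    obtain ⟨hl, hrows⟩ := (isAdmissible_append hb).1 hl
    have hdom := ih hl hlC
    have hheight := hl.length_diagram_le hdom fun _ => lt_length_of_mem_rowReading
    rw [rowReading_append_singleton, List.map_map]
    refine List.rel_append hdom (List.forall₂_map_right_iff.2 (List.forall₂_same.2 fun x hx => ?_))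
    exact ⟨rfl, (hrows x hx).trans hheight⟩

theorem IsAdmissible.eq_rowReading_or_rowSum_lt {l : List (A × ℕ)} (hl : IsAdmissible l) :
    l = rowReading (descentCut l) ∨ rowSum (diagram l) < rowSum (descentCut l) := by
  rw [hl.rowSum_diagram]
  exact hl.rowDominated_rowReading.eq_or_sum_lt

theorem finite_setOf_descentCut_eq (C : Sentence A) :
    {l | IsAdmissible l ∧ descentCut l = C}.Finite := by
  refine (finite_setOf_rowDominated (rowReading C)).subset ?_
  rintro l ⟨hl, rfl⟩
  exact hl.rowDominated_rowReading

end Triangularity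

section RibbonExpansion

variable {A : Type*}

/-- The admissible sequences of placements with descent cut `C`; they encode the standard colored
immaculate tableaux with colored descent composition `C`. -/
noncomputable def admissibleWithCut (C : Sentence A) : Finset (List (A × ℕ)) :=
  (finite_setOf_descentCut_eq C).toFinset

theorem mem_admissibleWithCut {C : Sentence A} {l : List (A × ℕ)} :
    l ∈ admissibleWithCut C ↔ IsAdmissible l ∧ descentCut l = C :=
  (finite_setOf_descentCut_eq C).mem_toFinset

theorem admissibleWithCut_nil : admissibleWithCut ([] : Sentence A) = {[]} := by
  ext l
  rw [mem_admissibleWithCut, descentCut_eq_nil, Finset.mem_singleton, and_iff_right_of_imp]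
  rintro rfl
  exact .nil

theorem admissibleWithCut_singleton {w : List A} (hw : w ≠ []) :
    admissibleWithCut [w] = rowPlacements 0 w := by
  ext l
  rw [mem_admissibleWithCut, descentCut_eq_singleton hw, mem_rowPlacements]
  constructor
  · rintro ⟨hl, hanti, hlw⟩
    exact ⟨hlw, hanti, ((isAdmissible_append (l := []) hanti).1 hl).2⟩
  · rintro ⟨hlw, hanti, hrows⟩
    exact ⟨(isAdmissible_append (l := []) hanti).2 ⟨.nil, hrows⟩, hanti, hlw⟩

theorem sum_admissibleWithCut_append_last {M : Type*} [AddCommMonoid M] {C : Sentence A}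
    {u w : List A} (hu : u ≠ []) (hw : w ≠ []) (F : List (A × ℕ) → M) :
    ∑ l ∈ admissibleWithCut (C ++ [u]), ∑ t ∈ rowPlacements (diagram l).length w, F (l ++ t) =
      ∑ m ∈ admissibleWithCut (C ++ [u] ++ [w]), F m +
        ∑ m ∈ admissibleWithCut (C ++ [u ++ w]), F m := by
  have hdisj : Disjoint (admissibleWithCut (C ++ [u] ++ [w]))
      (admissibleWithCut (C ++ [u ++ w])) := by
    refine Finset.disjoint_left.2 fun m hm hm' => ?_
    rw [mem_admissibleWithCut] at hm hm'
    simpa using congrArg List.length (hm.2.symm.trans hm'.2)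
  rw [← Finset.sum_disjUnion hdisj, Finset.sum_sigma']
  refine Finset.sum_bij (fun p _ => p.1 ++ p.2) ?_ ?_ ?_ fun _ _ => rfl
  · rintro ⟨l, t⟩ hlt
    obtain ⟨hl, ht⟩ := Finset.mem_sigma.1 hlt
    rw [mem_admissibleWithCut] at hl
    rw [mem_rowPlacements] at ht
    simp only [Finset.mem_disjUnion, mem_admissibleWithCut, ← and_or_left]
    exact ⟨(isAdmissible_append ht.2.1).2 ⟨hl.1, ht.2.2⟩,
      (descentCut_append_last_iff hu hw).2 ⟨l, t, rfl, hl.2, ht.2.1, ht.1⟩⟩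
  · rintro ⟨l, t⟩ hlt ⟨l', t'⟩ hlt' heq
    simp only [Finset.mem_sigma, mem_admissibleWithCut] at hlt hlt'
    have hlength : l.length = l'.length := by
      rw [← List.length_map Prod.fst, ← flatten_descentCut, hlt.1.2, ← hlt'.1.2,
        flatten_descentCut, List.length_map]
    obtain ⟨rfl, rfl⟩ := List.append_inj heq hlength
    rfl
  · intro m hm
    simp only [Finset.mem_disjUnion, mem_admissibleWithCut, ← and_or_left] at hm
    obtain ⟨l, t, rfl, hl, ht, htw⟩ := (descentCut_append_last_iff hu hw).1 hm.2
    obtain ⟨hadm, hrows⟩ := (isAdmissible_append ht).1 hm.1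
    exact ⟨⟨l, t⟩, Finset.mem_sigma.2 ⟨mem_admissibleWithCut.2 ⟨hadm, hl⟩,
      mem_rowPlacements.2 ⟨htw, ht, hrows⟩⟩, rfl⟩

theorem ribbon_eq_sum_immaculate {C : Sentence A} (hC : IsSentence C) :
    ribbon C = ∑ l ∈ admissibleWithCut C, immaculate (diagram l) := by
  induction h : C.length using Nat.strong_induction_on generalizing C with
  | _ n ih =>
  obtain rfl | ⟨C, w, rfl⟩ := C.eq_nil_or_concat'
  · rw [ribbon_nil, admissibleWithCut_nil, Finset.sum_singleton, diagram_nil,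
      immaculate_nil]
  have hw : w ≠ [] := isSentence_singleton.1 (isSentence_append.1 hC).2
  obtain rfl | ⟨C, u, rfl⟩ := C.eq_nil_or_concat'
  · rw [List.nil_append, ribbon_singleton hw, admissibleWithCut_singleton hw]
    have hmul := mulHRight_immaculate [] w
    rwa [immaculate_nil, mulHRight_single, List.nil_append, flattenWS_singleton hw] at hmul
  have hCu : IsSentence (C ++ [u]) := (isSentence_append.1 hC).1
  have hu : u ≠ [] := isSentence_singleton.1 (isSentence_append.1 hCu).2
  have hCuw : IsSentence (C ++ [u ++ w]) :=
    isSentence_append.2 ⟨(isSentence_append.1 hCu).1, isSentence_singleton.2 (by simp [hu])⟩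
  simp only [List.length_append, List.length_singleton] at h
  have hmul := mulHRight_ribbon hCu hw
  rw [ih (C.length + 1) (by omega) hCu (by simp), ih (C.length + 1) (by omega) hCuw (by simp),
    map_sum] at hmul
  simp only [mulHRight_immaculate, ← diagram_append] at hmul
  rw [sum_admissibleWithCut_append_last hu hw fun m => immaculate (diagram m)] at hmul
  exact (add_right_cancel hmul).symm

end RibbonExpansion

section TableauCount

variable {A : Type*}

open Classical in
/-- The number of admissible sequences of placements with diagram `K` and descent cut `C`. -/
noncomputable def admissibleCount (K C : Sentence A) : ℕ :=
  ((admissibleWithCut C).filter (diagram · = K)).card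

theorem admissibleCount_ne_zero {K C : Sentence A} :
    admissibleCount K C ≠ 0 ↔ ∃ l, IsAdmissible l ∧ descentCut l = C ∧ diagram l = K := by
  classical
  simp [admissibleCount, Finset.filter_eq_empty_iff, mem_admissibleWithCut]

theorem admissibleCount_self {C : Sentence A} (hC : IsSentence C) : admissibleCount C C = 1 := by
  classical
  refine Finset.card_eq_one.2 ⟨rowReading C, Finset.ext fun l => ?_⟩
  rw [Finset.mem_filter, mem_admissibleWithCut, Finset.mem_singleton]
  constructor
  · rintro ⟨⟨hl, hcut⟩, hdiag⟩
    have h := hl.eq_rowReading_or_rowSum_lt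
    rw [hcut, hdiag] at h
    exact h.resolve_right (lt_irrefl _)
  · rintro rfl
    exact ⟨⟨hC.isAdmissible_rowReading, hC.descentCut_rowReading⟩, hC.diagram_rowReading⟩

theorem rowSum_lt_of_admissibleCount_ne_zero {K C : Sentence A} (h : admissibleCount K C ≠ 0)
    (hne : K ≠ C) : rowSum K < rowSum C := by
  obtain ⟨l, hl, rfl, rfl⟩ := admissibleCount_ne_zero.1 h
  refine hl.eq_rowReading_or_rowSum_lt.resolve_left fun heq => hne ?_
  conv_lhs => rw [heq]
  exact (isSentence_descentCut l).diagram_rowReading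

theorem isSentence_of_admissibleCount_ne_zero {K C : Sentence A} (h : admissibleCount K C ≠ 0) :
    IsSentence K := by
  obtain ⟨l, -, -, rfl⟩ := admissibleCount_ne_zero.1 h
  exact isSentence_diagram l

theorem size_eq_of_admissibleCount_ne_zero {K C : Sentence A} (h : admissibleCount K C ≠ 0) :
    size K = size C := by
  obtain ⟨l, hl, rfl, rfl⟩ := admissibleCount_ne_zero.1 h
  rw [size, size, ← List.length_flatten, ← List.length_flatten, flatten_descentCut]
  exact hl.perm_flatten_diagram.length_eq.symm

end TableauCount

section DescentComposition

variable {A : Type*}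

theorem descentCut_singleton (x : A × ℕ) : descentCut [x] = [[x.1]] := rfl

theorem descentCut_cons_cons_of_lt {x y : A × ℕ} (l : List (A × ℕ)) (h : x.2 < y.2) :
    descentCut (x :: y :: l) = [x.1] :: descentCut (y :: l) := by
  have hsplit := List.splitBy_append_cons (r := fun x y : A × ℕ => y.2 ≤ x.2) (l := [x])
    (a := y) l (by simpa using h)
  exact congrArg (List.map (List.map Prod.fst)) hsplit

theorem descentCut_cons_cons_of_le {x y : A × ℕ} (l : List (A × ℕ)) (h : y.2 ≤ x.2) :
    descentCut (x :: y :: l) = (descentCut (y :: l)).modifyHead (x.1 :: ·) := by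
  obtain ⟨b, B, hB⟩ := List.exists_cons_of_ne_nil
    (List.splitBy_ne_nil (r := fun x y : A × ℕ => y.2 ≤ x.2).2 (List.cons_ne_nil y l))
  obtain ⟨hflat, hnil, hchain, hdesc⟩ := List.splitBy_eq_iff.1 hB
  obtain _ | ⟨z, b⟩ := b
  · simp at hnil
  obtain ⟨rfl, rfl⟩ : y = z ∧ l = b ++ B.flatten := by simpa using hflat
  have hsplit : (x :: y :: (b ++ B.flatten)).splitBy (fun x y => y.2 ≤ x.2) =
      (x :: y :: b) :: B := by
    refine List.splitBy_eq_iff.2 ⟨by simp, by simpa using hnil, fun m hm => ?_, ?_⟩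
    · rcases List.mem_cons.1 hm with rfl | hm
      · exact (hchain _ List.mem_cons_self).cons_cons (by simpa using h)
      · exact hchain m (List.mem_cons_of_mem _ hm)
    · cases B with
      | nil => exact .singleton _
      | cons c B =>
        obtain ⟨hhead, htail⟩ := List.isChain_cons_cons.1 hdesc
        exact htail.cons_cons (by simpa using hhead)
  rw [descentCut, descentCut, hsplit, hB]
  rfl

theorem splitByComp_cons (a : A) (w : List A) {o n : ℕ} {ds : List ℕ}
    (hds : ∀ d ∈ ds ++ [n], o < d) :
    splitByComp (a :: w) (List.zipWith (fun a b => b - a) (o :: ds) (ds ++ [n])) =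
      (splitByComp w (List.zipWith (fun a b => b - a) ((o + 1) :: ds) (ds ++ [n]))).modifyHead
        (a :: ·) := by
  obtain ⟨d, ds', hd⟩ := List.exists_cons_of_ne_nil (List.append_ne_nil_of_right_ne_nil ds
    (List.cons_ne_nil n []))
  rw [hd] at hds ⊢
  obtain ⟨k, rfl⟩ := Nat.exists_eq_add_of_lt (hds d List.mem_cons_self)
  have hlast : o + k + 1 - o = k + 1 := by omega
  have hlast' : o + k + 1 - (o + 1) = k := by omega
  simp [splitByComp, hlast, hlast']

theorem splitByComp_eq_descentCut (c : ℕ → A) (r : ℕ → ℕ) (o n : ℕ) {ds : List ℕ}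
    (hds : ds = (List.range' (o + 1) n).filter fun i => r i < r (i + 1)) :
    splitByComp ((List.range' (o + 1) (n + 1)).map c)
        (List.zipWith (fun a b => b - a) (o :: ds) (ds ++ [o + n + 1])) =
      descentCut ((List.range' (o + 1) (n + 1)).map fun v => (c v, r v)) := by
  induction n generalizing o ds with
  | zero =>
    subst hds
    simp [splitByComp, descentCut_singleton]
  | succ n ih =>
    obtain ⟨ds', hds'⟩ :
      ∃ ds', ds' = (List.range' (o + 1 + 1) n).filter fun i => r i < r (i + 1) := ⟨_, rfl⟩
    have ih := ih (o + 1) hds'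
    rw [List.range'_succ, List.filter_cons, ← hds'] at hds
    rw [List.range'_succ (n := n + 1), List.map_cons, List.map_cons,
      show o + (n + 1) + 1 = o + 1 + n + 1 by omega]
    have hcons : (List.range' (o + 1 + 1) (n + 1)).map (fun v => (c v, r v)) =
      (c (o + 1 + 1), r (o + 1 + 1)) ::
        (List.range' (o + 1 + 1 + 1) n).map fun v => (c v, r v) := rfl
    by_cases hlt : r (o + 1) < r (o + 1 + 1)
    · rw [hcons, descentCut_cons_cons_of_lt _ hlt, ← hcons, ← ih, hds,
        if_pos (by simpa using hlt)]
      simp [splitByComp]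
    · have hmem : ∀ d ∈ ds' ++ [o + 1 + n + 1], o < d := by
        intro d hd
        rw [hds', List.mem_append, List.mem_filter, List.mem_range'_1, List.mem_singleton] at hd
        omega
      rw [hcons, descentCut_cons_cons_of_le _ (not_lt.1 hlt), ← hcons, ← ih, hds,
        if_neg (by simpa using hlt), splitByComp_cons _ _ hmem]

theorem coA_eq_descentCut [Inhabited A] (I : Sentence A) (f : Filling) :
    coA I f = descentCut ((List.range' 1 (nBoxes f)).map fun v => (colorOf I f v, rowOf f v)) := by
  have hread : readWord I f = (List.range' 1 (nBoxes f)).map (colorOf I f) := by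
    simp [readWord, List.range'_eq_map_range, Function.comp_def, Nat.add_comm]
  rw [coA, hread]
  cases h : nBoxes f with
  | zero => rfl
  | succ n =>
    rw [if_neg n.succ_ne_zero, compOf, ← splitByComp_eq_descentCut _ _ 0 n rfl, descList, h]
    simp

end DescentComposition

section Tableaux

variable {A : Type*}

theorem rowOf_eq_iff {f : Filling} (hf : f.flatten.Nodup) {v r : ℕ} (hv : v ∈ f.flatten) :
    rowOf f v = r ↔ v ∈ f.getD r [] := by
  have hmem : v ∈ f.getD (rowOf f v) [] := by
    obtain ⟨row, hrow, hvrow⟩ := List.mem_flatten.1 hv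
    have hlt : rowOf f v < f.length := List.findIdx_lt_length_of_exists ⟨row, hrow, by simpa⟩
    have hfind : f[rowOf f v].contains v := List.findIdx_getElem (w := hlt)
    simpa [List.getD_eq_getElem?_getD, hlt] using hfind
  refine ⟨fun h => h ▸ hmem, fun h => ?_⟩
  by_contra hne
  have hdisj : ∀ r s, r < s → List.Disjoint (f.getD r []) (f.getD s []) := by
    intro r s hrs
    rcases lt_or_ge s f.length with hs | hs
    · simpa [List.getD_eq_getElem?_getD, hs, hrs.trans hs] using
        List.pairwise_iff_getElem.1 (List.nodup_flatten.1 hf).2 r s (hrs.trans hs) hs hrs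
    · simp [List.getD_eq_getElem?_getD, hs]
  rcases lt_or_gt_of_ne hne with hlt | hlt
  · exact hdisj _ _ hlt hmem h
  · exact hdisj _ _ hlt h hmem

theorem colorOf_getElem [Inhabited A] (I : Sentence A) {f : Filling} (hf : f.flatten.Nodup)
    {r k : ℕ} (hr : r < f.length) (hk : k < f[r].length) :
    colorOf I f f[r][k] = (I.getD r []).getD k default := by
  have hmem : f[r][k] ∈ f[r] := List.getElem_mem hk
  have hrow : rowOf f f[r][k] = r :=
    (rowOf_eq_iff hf (List.mem_flatten.2 ⟨_, List.getElem_mem hr, hmem⟩)).2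
      (by simp [List.getD_eq_getElem?_getD, hr])
  have hnodup : f[r].Nodup := (List.nodup_flatten.1 hf).1 _ (List.getElem_mem hr)
  have hcol : f[r].findIdx (· == f[r][k]) = k := hnodup.idxOf_getElem k hk
  have hget : f.getD r [] = f[r] := by simp [List.getD_eq_getElem?_getD, hr]
  rw [colorOf, hrow, hget, hcol]

theorem map_colorOf [Inhabited A] {I : Sentence A} {f : Filling} (hf : f.flatten.Nodup)
    (hshape : f.map List.length = I.map List.length) :
    f.map (List.map (colorOf I f)) = I := by
  have hlength : f.length = I.length := by simpa using congrArg List.length hshape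
  refine List.ext_getElem (by simpa) fun r hr hr' => ?_
  rw [List.length_map] at hr
  have hrow : f[r].length = I[r].length := by
    simpa [hr, hr'] using congrArg (fun s => s[r]?) hshape
  refine List.ext_getElem (by simpa) fun k hk hk' => ?_
  simp only [List.getElem_map] at hk ⊢
  rw [List.length_map] at hk
  simp [colorOf_getElem I hf hr hk, List.getD_eq_getElem?_getD, hr', hk']

theorem colorOf_map [Inhabited A] {f : Filling} (hf : f.flatten.Nodup) (c : ℕ → A) {v : ℕ}
    (hv : v ∈ f.flatten) : colorOf (f.map (List.map c)) f v = c v := by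
  obtain ⟨row, hrow, hvrow⟩ := List.mem_flatten.1 hv
  obtain ⟨r, hr, rfl⟩ := List.getElem_of_mem hrow
  obtain ⟨k, hk, rfl⟩ := List.getElem_of_mem hvrow
  simp [colorOf_getElem _ hf hr hk, List.getD_eq_getElem?_getD, hr, hk]

/-- The sequence of placements which builds the filling `f` entry by entry. -/
def entryPlacements (f : Filling) : List (ℕ × ℕ) :=
  (List.range' 1 (nBoxes f)).map fun v => (v, rowOf f v)

/-- The sequence of placements which builds `I` by adding its boxes in the order given by the
entries of the filling `f`. -/
def tableauPlacements [Inhabited A] (I : Sentence A) (f : Filling) : List (A × ℕ) :=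
  (entryPlacements f).map (Prod.map (colorOf I f) id)

theorem coA_eq_descentCut_tableauPlacements [Inhabited A] (I : Sentence A) (f : Filling) :
    coA I f = descentCut (tableauPlacements I f) := by
  simp [coA_eq_descentCut, tableauPlacements, entryPlacements, Function.comp_def]

theorem IsStandardF.nodup {f : Filling} (hf : IsStandardF f) : f.flatten.Nodup :=
  hf.nodup_iff.2 List.nodup_range'

theorem IsStandardF.mem_flatten {f : Filling} (hf : IsStandardF f) {v : ℕ} :
    v ∈ f.flatten ↔ 1 ≤ v ∧ v ≤ nBoxes f := by
  rw [hf.mem_iff, List.mem_range'_1]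
  omega

theorem IsCIT.isSentence {I : Sentence A} {f : Filling} (hf : IsCIT I f) (hI : IsSentence I) :
    IsSentence f := by
  intro row hrow hnil
  have hmem : row.length ∈ I.map List.length := hf.1 ▸ List.mem_map_of_mem hrow
  obtain ⟨w, hw, hlength⟩ := List.mem_map.1 hmem
  exact hI w hw (List.length_eq_zero_iff.1 (by rw [hlength, hnil, List.length_nil]))

theorem IsCIT.head_lt {I : Sentence A} {f : Filling} (hf : IsCIT I f) {r s : ℕ} (hrs : r < s)
    {x y : ℕ} (hx : (f.getD r []).head? = some x) (hy : y ∈ f.getD s []) : x < y := by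
  obtain ⟨-, hrows, hcol, -⟩ := hf
  have hs : s < f.length := by
    by_contra h
    simp [List.getD_eq_getElem?_getD, not_lt.1 h] at hy
  have hr : r < f.length := hrs.trans hs
  simp only [List.getD_eq_getElem?_getD, hr, hs, getElem?_pos, Option.getD_some] at hx hy
  obtain ⟨z, zs, hz⟩ := List.exists_cons_of_ne_nil (List.ne_nil_of_mem hy)
  have hxz : x < z := List.pairwise_iff_getElem.1 (List.pairwise_filterMap.1 hcol.pairwise)
    r s hr hs hrs x hx z (by rw [hz]; rfl)
  have hrow := (hrows _ (List.getElem_mem hs)).pairwise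
  rw [hz] at hy hrow
  rcases List.mem_cons.1 hy with rfl | hy
  · exact hxz
  · exact hxz.trans_le ((List.pairwise_cons.1 hrow).1 y hy)

theorem mem_flatten_of_mem_getD {f : Filling} {r v : ℕ} (hv : v ∈ f.getD r []) :
    v ∈ f.flatten := by
  rcases lt_or_ge r f.length with hr | hr
  · exact List.mem_flatten.2 ⟨_, List.getElem_mem hr,
      by simpa [List.getD_eq_getElem?_getD, hr] using hv⟩
  · simp [List.getD_eq_getElem?_getD, hr] at hv

theorem IsStandardF.isAdmissible_entryPlacements {I : Sentence A} {f : Filling}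
    (hf : IsStandardF f) (hcit : IsCIT I f) (hI : IsSentence I) :
    IsAdmissible (entryPlacements f) := by
  suffices h : ∀ k ≤ nBoxes f, IsAdmissible ((List.range' 1 k).map fun v => (v, rowOf f v)) from
    h _ le_rfl
  intro k hk
  induction k with
  | zero => exact .nil
  | succ k ih =>
    have hadm := ih (Nat.le_of_succ_le hk)
    rw [List.range'_1_concat, List.map_append]
    refine hadm.append_singleton (le_of_forall_lt fun r hr => hadm.lt_length_diagram_iff.2 ?_)
    have hmem : 1 + k ∈ f.getD (rowOf f (1 + k)) [] :=
      (rowOf_eq_iff hf.nodup (hf.mem_flatten.2 (by omega))).1 rfl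
    have hlt : rowOf f (1 + k) < f.length :=
      (hcit.isSentence hI).lt_length_iff.2 (List.ne_nil_of_mem hmem)
    obtain ⟨x, row, hrow⟩ := List.exists_cons_of_ne_nil
      ((hcit.isSentence hI).lt_length_iff.1 (lt_trans hr hlt))
    have hx : x ∈ f.getD r [] := by rw [hrow]; exact List.mem_cons_self
    have hxk : x < 1 + k := hcit.head_lt hr (by rw [hrow]; rfl) hmem
    have hxf := mem_flatten_of_mem_getD hx
    exact ⟨(x, r), List.mem_map.2 ⟨x, List.mem_range'_1.2 ⟨(hf.mem_flatten.1 hxf).1, hxk⟩,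
      by rw [(rowOf_eq_iff hf.nodup hxf).2 hx]⟩, rfl⟩

theorem IsStandardF.diagram_entryPlacements {I : Sentence A} {f : Filling}
    (hf : IsStandardF f) (hcit : IsCIT I f) (hI : IsSentence I) :
    diagram (entryPlacements f) = f := by
  refine (isSentence_diagram _).ext_getD (hcit.isSentence hI) fun r => ?_
  have hfilter : ((entryPlacements f).filter (·.2 = r)).map Prod.fst =
      (List.range' 1 (nBoxes f)).filter (rowOf f · = r) := by
    simp [entryPlacements, List.filter_map, Function.comp_def]
  rw [(hf.isAdmissible_entryPlacements hcit hI).getD_diagram, hfilter]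
  have hrow : (f.getD r []).Pairwise (· ≤ ·) ∧ (f.getD r []).Nodup := by
    rcases lt_or_ge r f.length with hr | hr
    · simpa [List.getD_eq_getElem?_getD, hr] using
        And.intro (hcit.2.1 _ (List.getElem_mem hr)).pairwise
          ((List.nodup_flatten.1 hf.nodup).1 _ (List.getElem_mem hr))
    · simp [List.getD_eq_getElem?_getD, hr]
  have hsorted : ((List.range' 1 (nBoxes f)).filter (rowOf f · = r)).Pairwise (· ≤ ·) :=
    (List.pairwise_le_range' (s := 1)).filter _
  refine List.Perm.eq_of_pairwise' hsorted hrow.1 ((List.perm_ext_iff_of_nodup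
    ((List.nodup_range' (step := 1)).sublist List.filter_sublist) hrow.2).2 fun v => ?_)
  rw [List.mem_filter, decide_eq_true_iff, List.mem_range'_1]
  constructor
  · rintro ⟨hv, hvr⟩
    exact (rowOf_eq_iff hf.nodup (hf.mem_flatten.2 (by omega))).1 hvr
  · intro hv
    have hvf := mem_flatten_of_mem_getD hv
    exact ⟨by have := hf.mem_flatten.1 hvf; omega, (rowOf_eq_iff hf.nodup hvf).2 hv⟩

theorem IsAdmissible.perm_flatten_diagram_range' {e : List (ℕ × ℕ)} (he : IsAdmissible e)
    {n : ℕ} (hn : e.map Prod.fst = List.range' 1 n) :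
    (diagram e).flatten.Perm (List.range' 1 n) :=
  hn ▸ he.perm_flatten_diagram.symm

theorem IsAdmissible.nBoxes_diagram {e : List (ℕ × ℕ)} (he : IsAdmissible e) {n : ℕ}
    (hn : e.map Prod.fst = List.range' 1 n) : nBoxes (diagram e) = n :=
  (he.perm_flatten_diagram_range' hn).length_eq.trans List.length_range'

theorem IsAdmissible.isStandardF_diagram {e : List (ℕ × ℕ)} (he : IsAdmissible e) {n : ℕ}
    (hn : e.map Prod.fst = List.range' 1 n) : IsStandardF (diagram e) := by
  rw [IsStandardF, he.nBoxes_diagram hn]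
  exact he.perm_flatten_diagram_range' hn

theorem IsAdmissible.entryPlacements_diagram {e : List (ℕ × ℕ)} (he : IsAdmissible e) {n : ℕ}
    (hn : e.map Prod.fst = List.range' 1 n) : entryPlacements (diagram e) = e := by
  have hrow : ∀ x ∈ e, (x.1, rowOf (diagram e) x.1) = x := by
    intro x hx
    have hmem : x.1 ∈ (diagram e).getD x.2 [] := by
      rw [he.getD_diagram]
      exact List.mem_map_of_mem (List.mem_filter.2 ⟨hx, by simp⟩)
    exact Prod.ext rfl ((rowOf_eq_iff (he.isStandardF_diagram hn).nodup
      (mem_flatten_of_mem_getD hmem)).2 hmem)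
  rw [entryPlacements, he.nBoxes_diagram hn, ← hn, List.map_map]
  exact (List.map_congr_left hrow).trans (List.map_id' e)

theorem filterMap_head?_modify_append {J : Sentence A} (hJ : IsSentence J) (r : ℕ) (w : List A) :
    (J.modify r (· ++ w)).filterMap List.head? = J.filterMap List.head? := by
  induction J generalizing r with
  | nil => simp
  | cons v J ih =>
    obtain ⟨hv, hJ'⟩ := isSentence_cons.1 hJ
    obtain ⟨a, v, rfl⟩ := List.exists_cons_of_ne_nil hv
    cases r with
    | zero => simp
    | succ r => simp [ih hJ']

theorem filterMap_head?_appendLetter_sublist {J : Sentence A} (hJ : IsSentence J) (x : A × ℕ) :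
    ((appendLetter J x).filterMap List.head?).Sublist (J.filterMap List.head? ++ [x.1]) := by
  unfold appendLetter
  split_ifs with hx
  · rw [filterMap_head?_modify_append hJ]
    exact List.sublist_append_left _ _
  · simp

theorem filterMap_head?_diagram_sublist (l : List (A × ℕ)) :
    ((diagram l).filterMap List.head?).Sublist (l.map Prod.fst) := by
  induction l using List.reverseRecOn with
  | nil => exact List.Sublist.refl _
  | append_singleton l x ih =>
    rw [diagram_append_singleton, List.map_append]
    exact (filterMap_head?_appendLetter_sublist (isSentence_diagram l) x).trans
      (ih.append_right _)

theorem IsAdmissible.isCIT_diagram {e : List (ℕ × ℕ)} (he : IsAdmissible e) {n : ℕ}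
    (hn : e.map Prod.fst = List.range' 1 n) {I : Sentence A}
    (hshape : (diagram e).map List.length = I.map List.length) : IsCIT I (diagram e) := by
  refine ⟨hshape, fun row hrow => ?_, ?_, fun x hx =>
    (List.mem_range'_1.1 ((he.perm_flatten_diagram_range' hn).mem_iff.1 hx)).1⟩
  · obtain ⟨r, hr, rfl⟩ := List.getElem_of_mem hrow
    have hget : (diagram e)[r] = (e.filter (·.2 = r)).map Prod.fst := by
      simpa [List.getD_eq_getElem?_getD, hr] using he.getD_diagram r
    rw [hget]
    exact ((List.pairwise_le_range' (s := 1)).sublist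
      (hn ▸ List.filter_sublist.map Prod.fst)).isChain
  · exact ((List.pairwise_lt_range' (s := 1)).sublist
      (hn ▸ filterMap_head?_diagram_sublist e)).isChain

/-- The sequence of placements `l` with its letters replaced by `1, 2, …`. -/
def relabel (l : List (A × ℕ)) : List (ℕ × ℕ) :=
  (l.zipIdx 1).map fun p => (p.2, p.1.2)

theorem map_fst_relabel (l : List (A × ℕ)) :
    (relabel l).map Prod.fst = List.range' 1 l.length := by
  simp [relabel, Function.comp_def, ← List.zipIdx_map_snd]

theorem map_relabel [Inhabited A] (l : List (A × ℕ)) :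
    (relabel l).map (Prod.map (fun v => (l.map Prod.fst).getD (v - 1) default) id) = l := by
  refine List.ext_getElem (by simp [relabel]) fun k hk hk' => ?_
  simp [relabel, List.getD_eq_getElem?_getD, hk']

theorem relabel_tableauPlacements [Inhabited A] (I : Sentence A) (f : Filling) :
    relabel (tableauPlacements I f) = entryPlacements f := by
  refine List.ext_getElem (by simp [relabel, tableauPlacements]) fun k hk hk' => ?_
  simp [relabel, tableauPlacements, entryPlacements]

theorem IsStandardF.diagram_tableauPlacements [Inhabited A] {I : Sentence A} {f : Filling}
    (hf : IsStandardF f) (hcit : IsCIT I f) (hI : IsSentence I) :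
    diagram (tableauPlacements I f) = I := by
  rw [tableauPlacements, diagram_map, hf.diagram_entryPlacements hcit hI,
    map_colorOf hf.nodup hcit.1]

theorem exists_tableauPlacements_eq [Inhabited A] {l : List (A × ℕ)} (hl : IsAdmissible l) :
    ∃ f, IsCIT (diagram l) f ∧ IsStandardF f ∧ tableauPlacements (diagram l) f = l := by
  set c : ℕ → A := fun v => (l.map Prod.fst).getD (v - 1) default
  have hmap : (relabel l).map (Prod.map c id) = l := map_relabel l
  have he : IsAdmissible (relabel l) := (isAdmissible_map c).1 (hmap.symm ▸ hl)
  have hn := map_fst_relabel l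
  have hstd := he.isStandardF_diagram hn
  have hdiagram : diagram l = (diagram (relabel l)).map (List.map c) := by
    rw [← diagram_map, hmap]
  refine ⟨diagram (relabel l), he.isCIT_diagram hn (by simp [hdiagram, Function.comp_def]),
    hstd, ?_⟩
  have hcolor : ∀ x ∈ relabel l,
      Prod.map (colorOf (diagram l) (diagram (relabel l))) id x = Prod.map c id x := by
    intro x hx
    have hmem : x.1 ∈ (diagram (relabel l)).flatten :=
      he.perm_flatten_diagram.mem_iff.1 (List.mem_map_of_mem hx)
    rw [Prod.map, Prod.map, hdiagram, colorOf_map hstd.nodup c hmem]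
  rw [tableauPlacements, he.entryPlacements_diagram hn, List.map_congr_left hcolor, hmap]

theorem LJC_eq_admissibleCount [Inhabited A] {I : Sentence A} (hI : IsSentence I)
    (C : Sentence A) : LJC I C = admissibleCount I C := by
  classical
  have hinj : Set.InjOn (tableauPlacements I)
      {f : Filling | IsCIT I f ∧ IsStandardF f ∧ coA I f = C} := by
    rintro f ⟨hcit, hf, -⟩ g ⟨hcit', hg, -⟩ hfg
    rw [← hf.diagram_entryPlacements hcit hI, ← hg.diagram_entryPlacements hcit' hI,
      ← relabel_tableauPlacements I, ← relabel_tableauPlacements I, hfg]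
  have himage : tableauPlacements I '' {f : Filling | IsCIT I f ∧ IsStandardF f ∧ coA I f = C} =
      ((admissibleWithCut C).filter (diagram · = I) : Finset (List (A × ℕ))) := by
    ext l
    simp only [Set.mem_image, Set.mem_ofPred_eq, Finset.coe_filter, mem_admissibleWithCut]
    constructor
    · rintro ⟨f, ⟨hcit, hf, hcut⟩, rfl⟩
      exact ⟨⟨(isAdmissible_map _).2 (hf.isAdmissible_entryPlacements hcit hI),
        (coA_eq_descentCut_tableauPlacements I f).symm.trans hcut⟩,
        hf.diagram_tableauPlacements hcit hI⟩
    · rintro ⟨⟨hl, hcut⟩, rfl⟩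
      obtain ⟨f, hcit, hf, hfl⟩ := exists_tableauPlacements_eq hl
      exact ⟨f, ⟨hcit, hf, by rw [coA_eq_descentCut_tableauPlacements, hfl, hcut]⟩, hfl⟩
  rw [LJC, ← hinj.ncard_image, himage, Set.ncard_coe_finset, admissibleCount]

end Tableaux

section Predecessors

variable {A : Type*}

open Classical in
/-- The sentences with an edge to `C` in the colored immaculate descent graph. -/
noncomputable def predecessors (C : Sentence A) : Finset (Sentence A) :=
  ((admissibleWithCut C).image diagram).erase C

theorem mem_predecessors {K C : Sentence A} :
    K ∈ predecessors C ↔ K ≠ C ∧ admissibleCount K C ≠ 0 := by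
  classical
  simp [predecessors, admissibleCount_ne_zero, mem_admissibleWithCut, and_assoc]

theorem rowSum_lt_of_mem_predecessors {K C : Sentence A} (h : K ∈ predecessors C) :
    rowSum K < rowSum C :=
  rowSum_lt_of_admissibleCount_ne_zero (mem_predecessors.1 h).2 (mem_predecessors.1 h).1

theorem isSentence_of_mem_predecessors {K C : Sentence A} (h : K ∈ predecessors C) :
    IsSentence K :=
  isSentence_of_admissibleCount_ne_zero (mem_predecessors.1 h).2

theorem ribbon_eq_immaculate_add_sum {C : Sentence A} (hC : IsSentence C) :
    ribbon C =
      immaculate C + ∑ K ∈ predecessors C, (admissibleCount K C : ℚ) • immaculate K := by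
  classical
  have hmem : C ∈ (admissibleWithCut C).image diagram := by
    have hself : admissibleCount C C ≠ 0 := by simp [admissibleCount_self hC]
    obtain ⟨l, hl, hcut, hdiag⟩ := admissibleCount_ne_zero.1 hself
    exact Finset.mem_image.2 ⟨l, mem_admissibleWithCut.2 ⟨hl, hcut⟩, hdiag⟩
  have hcount : ∀ K : Sentence A,
      ((admissibleWithCut C).filter (diagram · = K)).card • immaculate K =
        (admissibleCount K C : ℚ) • immaculate K := by
    intro K
    rw [Nat.cast_smul_eq_nsmul, admissibleCount]
  rw [ribbon_eq_sum_immaculate hC, Finset.sum_comp, Finset.sum_congr rfl fun K _ => hcount K,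
    ← Finset.add_sum_erase _ _ hmem, admissibleCount_self hC, Nat.cast_one, one_smul]
  rfl

end Predecessors

section Paths

variable {A : Type*} [Inhabited A]

theorem IsEdge.isSentence {K J : Sentence A} (h : IsEdge K J) : IsSentence J := by
  obtain ⟨f, -, -, rfl⟩ := Set.nonempty_of_ncard_ne_zero h.2
  rw [coA_eq_descentCut]
  exact isSentence_descentCut _

theorem isEdge_iff_mem_predecessors {K J : Sentence A} (hK : IsSentence K) :
    IsEdge K J ↔ K ∈ predecessors J := by
  rw [IsEdge, LJC_eq_admissibleCount hK, mem_predecessors, ne_comm]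

theorem append_singleton_mem_pathsFromTo {I J : Sentence A} {q : List (Sentence A)} :
    q ++ [J] ∈ PathsFromTo I J ↔
      q = [] ∧ I = J ∨ ∃ K, IsEdge K J ∧ q ∈ PathsFromTo I K := by
  obtain rfl | ⟨q, K, rfl⟩ := q.eq_nil_or_concat'
  · constructor
    · rintro ⟨hI, -⟩
      exact Or.inl ⟨rfl, (Option.some_injective _ hI).symm⟩
    · rintro (⟨-, rfl⟩ | ⟨K, -, hI, -⟩)
      · exact ⟨rfl, rfl, .singleton _⟩
      · simp at hI
  · have hhead : (q ++ [K] ++ [J]).head? = (q ++ [K]).head? := by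
      rw [List.head?_append_of_ne_nil _ (by simp)]
    have hchain : (q ++ [K] ++ [J]).IsChain IsEdge ↔ (q ++ [K]).IsChain IsEdge ∧ IsEdge K J := by
      simp
    have hlast : (q ++ [K]).getLast? = some K := List.getLast?_concat
    constructor
    · rintro ⟨hI, -, h⟩
      exact Or.inr ⟨K, (hchain.1 h).2, hhead ▸ hI, hlast, (hchain.1 h).1⟩
    · rintro (⟨hnil, -⟩ | ⟨K', hedge, hI, hK', h⟩)
      · simp at hnil
      · obtain rfl : K = K' := Option.some_injective _ (hlast.symm.trans hK')
        exact ⟨hhead.trans hI, List.getLast?_concat, hchain.2 ⟨h, hedge⟩⟩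

theorem eq_concat_of_mem_pathsFromTo {I J : Sentence A} {p : List (Sentence A)}
    (hp : p ∈ PathsFromTo I J) : ∃ q, p = q ++ [J] :=
  List.getLast?_eq_some_iff.1 hp.2.1

theorem pathsFromTo_nonempty_iff {I J : Sentence A} :
    (PathsFromTo I J).Nonempty ↔ Relation.ReflTransGen IsEdge I J := by
  constructor
  · rintro ⟨p, hp⟩
    induction p using List.reverseRecOn generalizing J with
    | nil => simp [PathsFromTo] at hp
    | append_singleton q K ih =>
      obtain rfl : K = J := Option.some_injective _ (List.getLast?_concat.symm.trans hp.2.1)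
      rcases append_singleton_mem_pathsFromTo.1 hp with ⟨-, rfl⟩ | ⟨K, hedge, hq⟩
      · exact .refl
      · exact (ih hq).tail hedge
  · intro h
    induction h with
    | refl => exact ⟨[I], append_singleton_mem_pathsFromTo.2 (Or.inl ⟨rfl, rfl⟩)⟩
    | tail _ hedge ih =>
      obtain ⟨q, hq⟩ := ih
      exact ⟨_, append_singleton_mem_pathsFromTo.2 (Or.inr ⟨_, hedge, hq⟩)⟩

theorem isSentence_of_reflTransGen {I J : Sentence A} (hI : IsSentence I)
    (h : Relation.ReflTransGen IsEdge I J) : IsSentence J := by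
  cases h with
  | refl => exact hI
  | tail _ hedge => exact hedge.isSentence

theorem size_eq_of_reflTransGen {I J : Sentence A} (hI : IsSentence I)
    (h : Relation.ReflTransGen IsEdge I J) : size I = size J := by
  induction h with
  | refl => rfl
  | tail hpath hedge ih =>
    have hK := isSentence_of_reflTransGen hI hpath
    exact ih.trans (size_eq_of_admissibleCount_ne_zero
      (mem_predecessors.1 ((isEdge_iff_mem_predecessors hK).1 hedge)).2)

theorem rowSum_le_of_reflTransGen {I J : Sentence A} (hI : IsSentence I)
    (h : Relation.ReflTransGen IsEdge I J) : rowSum I ≤ rowSum J := by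
  induction h with
  | refl => rfl
  | tail hpath hedge ih =>
    have hK := isSentence_of_reflTransGen hI hpath
    exact ih.trans (rowSum_lt_of_mem_predecessors
      ((isEdge_iff_mem_predecessors hK).1 hedge)).le

theorem finite_setOf_reflTransGen (J : Sentence A) :
    {I | IsSentence I ∧ Relation.ReflTransGen IsEdge I J}.Finite := by
  induction h : rowSum J using Nat.strong_induction_on generalizing J with
  | _ n ih =>
  subst h
  refine ((Set.finite_singleton J).union ((predecessors J).finite_toSet.biUnion fun K hK =>
    ih _ (rowSum_lt_of_mem_predecessors hK) K rfl)).subset ?_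
  rintro I ⟨hI, h⟩
  cases h with
  | refl => exact Or.inl rfl
  | tail hpath hedge =>
    have hK := isSentence_of_reflTransGen hI hpath
    exact Or.inr (Set.mem_biUnion (Finset.mem_coe.2 ((isEdge_iff_mem_predecessors hK).1 hedge))
      ⟨hI, hpath⟩)

theorem pathsFromTo_eq_union {I J : Sentence A} (hI : IsSentence I) :
    PathsFromTo I J =
      {p | p = [J] ∧ I = J} ∪ ⋃ K ∈ predecessors J, (· ++ [J]) '' PathsFromTo I K := by
  ext p
  simp only [Set.mem_union, Set.mem_ofPred_eq, Set.mem_iUnion, Set.mem_image, exists_prop]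
  constructor
  · intro hp
    obtain ⟨q, rfl⟩ := eq_concat_of_mem_pathsFromTo hp
    rcases append_singleton_mem_pathsFromTo.1 hp with ⟨rfl, hIJ⟩ | ⟨K, hedge, hq⟩
    · exact Or.inl ⟨rfl, hIJ⟩
    · have hK := isSentence_of_reflTransGen hI (pathsFromTo_nonempty_iff.1 ⟨q, hq⟩)
      exact Or.inr ⟨K, (isEdge_iff_mem_predecessors hK).1 hedge, q, hq, rfl⟩
  · rintro (⟨rfl, hIJ⟩ | ⟨K, hK, q, hq, rfl⟩)
    · exact append_singleton_mem_pathsFromTo.2 (Or.inl ⟨rfl, hIJ⟩)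
    · have hedge := (isEdge_iff_mem_predecessors (isSentence_of_mem_predecessors hK)).2 hK
      exact append_singleton_mem_pathsFromTo.2 (Or.inr ⟨K, hedge, hq⟩)

theorem finite_pathsFromTo {I : Sentence A} (hI : IsSentence I) (J : Sentence A) :
    (PathsFromTo I J).Finite := by
  induction h : rowSum J using Nat.strong_induction_on generalizing J with
  | _ n ih =>
  subst h
  rw [pathsFromTo_eq_union hI]
  exact ((Set.finite_singleton [J]).subset fun p hp => hp.1).union
    ((predecessors J).finite_toSet.biUnion fun K hK =>
      (ih _ (rowSum_lt_of_mem_predecessors hK) K rfl).image _)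

theorem pathWeight_singleton (J : Sentence A) : pathWeight [J] = 1 := by
  simp [pathWeight]

theorem zip_tail_concat {V : Type*} {p : List V} {u : V} (hp : p.getLast? = some u) (v : V) :
    (p ++ [v]).zip (p ++ [v]).tail = p.zip p.tail ++ [(u, v)] := by
  induction p with
  | nil => simp at hp
  | cons x p ih =>
    cases p with
    | nil => simpa using hp
    | cons y p => simpa using ih (by simpa using hp)

theorem pathWeight_append_singleton {I K : Sentence A} {q : List (Sentence A)}
    (hq : q ∈ PathsFromTo I K) (J : Sentence A) :
    pathWeight (q ++ [J]) = -((LJC K J : ℚ) * pathWeight q) := by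
  obtain ⟨k, hk⟩ : ∃ k, q.length = k + 1 :=
    Nat.exists_eq_succ_of_ne_zero (by rintro h; simp_all [PathsFromTo])
  rw [pathWeight, pathWeight, zip_tail_concat hq.2.1]
  simp only [List.length_append, List.length_singleton, hk, Nat.add_sub_cancel, List.map_append,
    List.map_singleton, List.prod_append, List.prod_singleton, pow_succ]
  ring

end Paths

section Inversion

variable {A : Type*} [Inhabited A]

theorem finsum_pathWeight_append_singleton {I : Sentence A} (hI : IsSentence I)
    (K J : Sentence A) :
    ∑ᶠ p ∈ (· ++ [J]) '' PathsFromTo I K, pathWeight p = -((LJC K J : ℚ) * Linv I K) := by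
  rw [finsum_mem_image (List.append_left_injective [J]).injOn,
    finsum_mem_congr rfl fun q hq => pathWeight_append_singleton hq J,
    finsum_mem_neg_distrib _ (finite_pathsFromTo hI K), Linv, mul_finsum_mem]

open Classical in
theorem Linv_eq_sub_sum {I : Sentence A} (hI : IsSentence I) (J : Sentence A) :
    Linv I J = (if I = J then 1 else 0) - ∑ K ∈ predecessors J, (LJC K J : ℚ) * Linv I K := by
  have htrivial : ∑ᶠ p ∈ {p | p = [J] ∧ I = J}, pathWeight p = if I = J then 1 else 0 := by
    split_ifs with h
    · simp [h, pathWeight_singleton]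
    · simp [h]
  have hfinite : ∀ K ∈ (predecessors J : Set (Sentence A)),
      ((· ++ [J]) '' PathsFromTo I K).Finite :=
    fun K _ => (finite_pathsFromTo hI K).image _
  have hdisj : Disjoint {p | p = [J] ∧ I = J}
      (⋃ K ∈ (predecessors J : Set (Sentence A)), (· ++ [J]) '' PathsFromTo I K) := by
    simp only [Set.disjoint_iUnion_right]
    refine fun K _ => Set.disjoint_left.2 ?_
    rintro _ ⟨rfl, -⟩ ⟨q, hq, hqJ⟩
    obtain rfl : q = [] := List.append_left_injective [J] hqJ
    simp [PathsFromTo] at hq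
  have hdisjK : (predecessors J : Set (Sentence A)).PairwiseDisjoint
      fun K => (· ++ [J]) '' PathsFromTo I K := by
    refine fun K _ K' _ hne => Set.disjoint_left.2 ?_
    rintro _ ⟨q, hq, rfl⟩ ⟨q', hq', hqq'⟩
    obtain rfl : q' = q := List.append_left_injective [J] hqq'
    exact hne (Option.some_injective _ (hq.2.1.symm.trans hq'.2.1))
  rw [Linv, pathsFromTo_eq_union hI]
  simp only [← Finset.mem_coe]
  rw [finsum_mem_union hdisj ((Set.finite_singleton [J]).subset fun p hp => hp.1)
      ((predecessors J).finite_toSet.biUnion hfinite), htrivial,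
    finsum_mem_biUnion hdisjK (predecessors J).finite_toSet hfinite, finsum_mem_coe_finset,
    Finset.sum_congr rfl fun K _ => finsum_pathWeight_append_singleton hI K J,
    Finset.sum_neg_distrib, sub_eq_add_neg]

theorem Linv_eq_zero {I J : Sentence A} (h : ¬(PathsFromTo I J).Nonempty) : Linv I J = 0 := by
  rw [Linv, Set.not_nonempty_iff_eq_empty.1 h, finsum_mem_empty]

theorem Linv_self {J : Sentence A} (hJ : IsSentence J) : Linv J J = 1 := by
  rw [Linv_eq_sub_sum hJ, if_pos rfl, sub_eq_self]
  refine Finset.sum_eq_zero fun K hK => ?_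
  rw [Linv_eq_zero, mul_zero]
  intro h
  exact (rowSum_lt_of_mem_predecessors hK).not_ge
    (rowSum_le_of_reflTransGen hJ (pathsFromTo_nonempty_iff.1 h))

theorem immaculate_eq_sum_Linv_smul_ribbon {J : Sentence A} (hJ : IsSentence J)
    {S : Finset (Sentence A)} (hS : ∀ I ∈ S, IsSentence I)
    (hreach : ∀ I, IsSentence I → Relation.ReflTransGen IsEdge I J → I ∈ S) :
    immaculate J = ∑ I ∈ S, Linv I J • ribbon I := by
  classical
  induction h : rowSum J using Nat.strong_induction_on generalizing J with
  | _ n ih =>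
  subst h
  have hpred : ∀ K ∈ predecessors J, (admissibleCount K J : ℚ) • immaculate K =
      ∑ I ∈ S, ((LJC K J : ℚ) * Linv I K) • ribbon I := by
    intro K hK
    have hKS := isSentence_of_mem_predecessors hK
    rw [← LJC_eq_admissibleCount hKS, ih _ (rowSum_lt_of_mem_predecessors hK) hKS
      (fun I hI h => hreach I hI (h.tail ((isEdge_iff_mem_predecessors hKS).2 hK))) rfl,
      Finset.smul_sum]
    simp only [smul_smul]
  have hdelta : ribbon J = ∑ I ∈ S, (if I = J then (1 : ℚ) else 0) • ribbon I := by
    simp [ite_smul, hreach J hJ .refl]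
  rw [eq_sub_of_add_eq (ribbon_eq_immaculate_add_sum hJ).symm, Finset.sum_congr rfl hpred,
    Finset.sum_comm, hdelta, ← Finset.sum_sub_distrib]
  refine Finset.sum_congr rfl fun I hI => ?_
  rw [Linv_eq_sub_sum (hS I hI), sub_smul, Finset.sum_smul]

theorem ImmS_eq_finsum_Linv_smul_Rib {J : Sentence A} (hJ : IsSentence J) :
    ImmS J = ∑ᶠ I ∈ {I : Sentence A | IsSentence I ∧ size I = size J}, Linv I J • Rib I := by
  set S := (finite_setOf_reflTransGen J).toFinset
  have hmem : ∀ I, I ∈ S ↔ IsSentence I ∧ Relation.ReflTransGen IsEdge I J :=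
    fun I => (finite_setOf_reflTransGen J).mem_toFinset
  have hsum : ImmS J = ∑ I ∈ S, Linv I J • Rib I := by
    rw [ImmS_eq_coe_immaculate, immaculate_eq_sum_Linv_smul_ribbon hJ
      (fun I hI => ((hmem I).1 hI).1) (fun I hI h => (hmem I).2 ⟨hI, h⟩), Finsupp.coe_finsetSum]
    refine Finset.sum_congr rfl fun I hI => ?_
    rw [Finsupp.coe_smul, Rib_eq_coe_ribbon ((hmem I).1 hI).1]
  rw [hsum, eq_comm]
  refine finsum_mem_eq_sum_of_subset _ ?_ ?_
  · rintro I ⟨⟨hI, -⟩, hsupp⟩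
    refine (hmem I).2 ⟨hI, by_contra fun h => hsupp ?_⟩
    change Linv I J • Rib I = 0
    rw [Linv_eq_zero (mt pathsFromTo_nonempty_iff.1 h), zero_smul]
  · intro I hI
    obtain ⟨hIS, hpath⟩ := (hmem I).1 hI
    exact ⟨hIS, size_eq_of_reflTransGen hIS hpath⟩

end Inversion

/-- For a sentence `J` of size `n`, the colored immaculate function
expands into the colored ribbon basis as `𝔖_J = Σ_I L⁻¹_{I,J} R_I`, summed over all
sentences `I` of size `n`, where `L⁻¹_{I,J} = Σ_𝒫 (-1)^{ℓ(𝒫)} prod(𝒫)` over directed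
paths from `I` to `J` in the colored immaculate descent graph (so `L⁻¹_{I,J} = 0` unless
`J` is reachable from `I`, and `L⁻¹_{J,J} = 1`). -/
theorem statement17 {A : Type*} [Inhabited A] (J : Sentence A) (hJ : IsSentence J) :
    (ImmS J = ∑ᶠ I ∈ {I : Sentence A | IsSentence I ∧ size I = size J}, Linv I J • Rib I) ∧
    (∀ I : Sentence A, ¬(PathsFromTo I J).Nonempty → Linv I J = 0) ∧
    Linv J J = 1 :=
  ⟨ImmS_eq_finsum_Linv_smul_Rib hJ, fun _ h => Linv_eq_zero h, Linv_self hJ⟩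

end ColoredImm
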